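/- arXiv:2206.08314 — 2 statements merged into one kernel-verified Lean document; each statement's English description precedes it below -/
import Mathlib

section
/- Let α ∈ (0,1), let μ, ν ≥ 1 be integers with μ + ν = m, and let f be of class C^{m+α}(D). Then for every z with |z| < R, T^ν T̄^μ (∂^μ∂̄^ν f)(z) = f(z) − Σ_{j=0}^{ν−1} T^j(S(∂̄^j f))(z) − Σ_{j=0}^{μ−1} T^ν T̄^j(S̄(∂^j∂̄^ν f))(z), where T^j and T̄^j denote j-fold iterates (T^0 = identity). -/
open Complex MeasureTheory Metric ENNReal NNReal

noncomputable section

/-- Wirtinger derivative `∂`. -/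
def wD (f : ℂ → ℂ) : ℂ → ℂ := fun z =>
  (fderiv ℝ f z 1 - Complex.I * fderiv ℝ f z Complex.I) / 2

/-- Wirtinger derivative `∂̄`. -/
def wDbar (f : ℂ → ℂ) : ℂ → ℂ := fun z =>
  (fderiv ℝ f z 1 + Complex.I * fderiv ℝ f z Complex.I) / 2

/-- Iterated Wirtinger derivative `∂^i ∂̄^j`. -/
def wDij (i j : ℕ) (f : ℂ → ℂ) : ℂ → ℂ := wD^[i] (wDbar^[j] f)

/-- α-Hölder constant of `f` on `A`, valued in `ℝ≥0∞`. -/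
def Hol (α : ℝ) (A : Set ℂ) (f : ℂ → ℂ) : ℝ≥0∞ :=
  ⨆ z ∈ A, ⨆ z' ∈ A, ⨆ _ : z ≠ z', (‖f z - f z'‖₊ : ℝ≥0∞) / (‖z - z'‖₊ : ℝ≥0∞) ^ α

/-- `f` is of class `C^{k+α}(D)`, `D` the closed disk of radius `R`. -/
def CkHolder (k : ℕ) (α R : ℝ) (f : ℂ → ℂ) : Prop :=
  (∃ U : Set ℂ, IsOpen U ∧ closedBall (0:ℂ) R ⊆ U ∧ ContDiffOn ℝ k f U) ∧
  ∀ i j : ℕ, i + j = k → Hol α (closedBall (0:ℂ) R) (wDij i j f) < ⊤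

/-- The norm `‖f‖ = sup_D |f| + (2R)^α H_α[f]`. -/
def hnorm (α R : ℝ) (f : ℂ → ℂ) : ℝ≥0∞ :=
  (⨆ z ∈ closedBall (0:ℂ) R, (‖f z‖₊ : ℝ≥0∞)) +
    ENNReal.ofReal ((2*R) ^ α) * Hol α (closedBall (0:ℂ) R) f

/-- The norm `‖f‖^{(k)} = max_{i+j=k} ‖∂^i∂̄^j f‖`. -/
def hnormK (k : ℕ) (α R : ℝ) (f : ℂ → ℂ) : ℝ≥0∞ :=
  ⨆ p ∈ Finset.HasAntidiagonal.antidiagonal k, hnorm α R (wDij p.1 p.2 f)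

/-- `C_0^{k+α}(D)`: members of `C^{k+α}(D)` all of whose derivatives of order `≤ k-1`
vanish at the origin. -/
def C0kHolder (k : ℕ) (α R : ℝ) (f : ℂ → ℂ) : Prop :=
  CkHolder k α R f ∧ ∀ i j : ℕ, i + j < k → wDij i j f 0 = 0

/-- The Cauchy–Green operator `T`. -/
def Tcg (R : ℝ) (g : ℂ → ℂ) : ℂ → ℂ := fun z =>
  -(Real.pi : ℂ)⁻¹ * ∫ ζ in closedBall (0:ℂ) R, g ζ / (ζ - z)

/-- The operator `T̄ g = conj (T (conj g))`. -/
def Tcgbar (R : ℝ) (g : ℂ → ℂ) : ℂ → ℂ := fun z =>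
  (starRingEnd ℂ) (Tcg R (fun w => (starRingEnd ℂ) (g w)) z)

/-- The Cauchy integral `S`. -/
def Scau (R : ℝ) (f : ℂ → ℂ) : ℂ → ℂ := fun z =>
  (2 * Real.pi * Complex.I)⁻¹ * ∮ ζ in C(0, R), f ζ / (ζ - z)

/-- The operator `S̄ f = conj (S (conj f))`. -/
def Scaubar (R : ℝ) (f : ℂ → ℂ) : ℂ → ℂ := fun z =>
  (starRingEnd ℂ) (Scau R (fun w => (starRingEnd ℂ) (f w)) z)

/-- The boundary operator `S_b`. -/
def Sb (R : ℝ) (f : ℂ → ℂ) : ℂ → ℂ := fun z =>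
  (2 * Real.pi * Complex.I)⁻¹ *
    ∫ θ in (0:ℝ)..(2 * Real.pi),
      f (R * Complex.exp (Complex.I * θ)) / (R * Complex.exp (Complex.I * θ) - z) *
        (-Complex.I * R * Complex.exp (-Complex.I * θ))

/-- The Taylor polynomial `P_k(ζ, z)` of `f` at `z` of degree `k`. -/
def TaylorP (k : ℕ) (f : ℂ → ℂ) (ζ z : ℂ) : ℂ :=
  ∑ l ∈ Finset.range (k+1), ((Nat.factorial l : ℂ))⁻¹ *
    ∑ p ∈ Finset.HasAntidiagonal.antidiagonal l,
      wDij p.1 p.2 f z * (ζ - z) ^ p.1 * ((starRingEnd ℂ) ζ - (starRingEnd ℂ) z) ^ p.2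

/-- The operator `^{k+2}T`. -/
def TkOp (k : ℕ) (R : ℝ) (f : ℂ → ℂ) : ℂ → ℂ := fun z =>
  -((Nat.factorial (k+1) : ℂ) / (Real.pi : ℂ)) *
    ∫ ζ in closedBall (0:ℂ) R, (f ζ - TaylorP k f ζ z) / (ζ - z) ^ (k + 2)

end

lemma cg_ball_ae (R : ℝ) : closedBall (0:ℂ) R =ᵐ[volume] ball (0:ℂ) R := by
  rw [← ball_union_sphere]
  exact union_ae_eq_left_of_ae_eq_empty (ae_eq_empty.2 (Measure.addHaar_sphere volume 0 R))

lemma cg_inv_int_unit : IntegrableOn (fun w : ℂ => ‖w‖⁻¹) (closedBall (0:ℂ) 1) := by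
  have h := (integrable_fun_norm_addHaar (E := ℂ) (F := ℝ) volume
    (f := Set.indicator (Set.Iic 1) (fun y => y⁻¹))).2 ?_
  · rw [← integrable_indicator_iff measurableSet_closedBall]
    refine h.congr (Filter.Eventually.of_forall fun w => ?_)
    simp [Set.indicator]
  · have : IntegrableOn (fun y : ℝ => (1:ℝ)) (Set.Ioc 0 1) := by simp
    rw [← integrable_indicator_iff measurableSet_Ioi]
    rw [← integrable_indicator_iff measurableSet_Ioc] at this
    refine this.congr (Filter.Eventually.of_forall fun y => ?_)
    by_cases h0 : 0 < y <;> by_cases h1 : y ≤ 1 <;> simp [Set.indicator, h0, h1]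
    exact (mul_inv_cancel₀ h0.ne').symm

/-- majorant of the Cauchy kernel -/
lemma cg_kernel_le (w : ℂ) :
    ‖w‖⁻¹ ≤ Set.indicator (closedBall (0:ℂ) 1) (fun w : ℂ => ‖w‖⁻¹) w + 1 := by
  by_cases h : w ∈ closedBall (0:ℂ) 1
  · rw [Set.indicator_of_mem h]; linarith
  · rw [Set.indicator_of_notMem h]
    simp only [mem_closedBall, dist_zero_right, not_le] at h
    simpa using inv_le_one_of_one_le₀ h.le

lemma cg_ind_int (z : ℂ) :
    Integrable (fun ζ : ℂ => Set.indicator (closedBall (0:ℂ) 1) (fun w : ℂ => ‖w‖⁻¹) (ζ - z)) := by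
  have := (integrable_indicator_iff (measurableSet_closedBall)).2 cg_inv_int_unit
  exact this.comp_sub_right z

lemma cg_kernel_int (R : ℝ) (z : ℂ) :
    IntegrableOn (fun ζ : ℂ => ‖ζ - z‖⁻¹) (closedBall (0:ℂ) R) := by
  have h1 : IntegrableOn (fun ζ : ℂ => Set.indicator (closedBall (0:ℂ) 1) (fun w : ℂ => ‖w‖⁻¹) (ζ - z) + 1)
      (closedBall (0:ℂ) R) := by
    refine (cg_ind_int z).integrableOn.add ?_
    exact integrableOn_const (measure_closedBall_lt_top).ne
  refine h1.mono' (by fun_prop) (Filter.Eventually.of_forall fun ζ => ?_)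
  simpa using cg_kernel_le (ζ - z)

lemma cg_kernel_bound (R : ℝ) : ∃ C : ℝ, ∀ z : ℂ, ∫ ζ in closedBall (0:ℂ) R, ‖ζ - z‖⁻¹ ≤ C := by
  refine ⟨(∫ ζ, Set.indicator (closedBall (0:ℂ) 1) (fun w : ℂ => ‖w‖⁻¹) ζ)
    + ∫ ζ in closedBall (0:ℂ) R, (1:ℝ), fun z => ?_⟩
  have hc : IntegrableOn (fun _ : ℂ => (1:ℝ)) (closedBall (0:ℂ) R) :=
    integrableOn_const (measure_closedBall_lt_top).ne
  calc ∫ ζ in closedBall (0:ℂ) R, ‖ζ - z‖⁻¹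
      ≤ ∫ ζ in closedBall (0:ℂ) R,
        (Set.indicator (closedBall (0:ℂ) 1) (fun w : ℂ => ‖w‖⁻¹) (ζ - z) + 1) := by
        refine integral_mono (cg_kernel_int R z) ((cg_ind_int z).integrableOn.add hc) fun ζ => ?_
        exact cg_kernel_le (ζ - z)
    _ = (∫ ζ in closedBall (0:ℂ) R,
        Set.indicator (closedBall (0:ℂ) 1) (fun w : ℂ => ‖w‖⁻¹) (ζ - z))
        + ∫ ζ in closedBall (0:ℂ) R, (1:ℝ) := integral_add (cg_ind_int z).integrableOn hc
    _ ≤ _ := by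
        gcongr
        rw [← integral_sub_right_eq_self
          (fun ζ => Set.indicator (closedBall (0:ℂ) 1) (fun w : ℂ => ‖w‖⁻¹) ζ) z]
        refine setIntegral_le_integral (cg_ind_int z) (Filter.Eventually.of_forall fun ζ => ?_)
        exact Set.indicator_nonneg (fun _ _ => by positivity) _

/-- essentially bounded functions on the disk -/
def cgQ (R : ℝ) (g : ℂ → ℂ) : Prop := MemLp g ∞ (volume.restrict (closedBall (0:ℂ) R))

lemma cgQ_int {R : ℝ} {g : ℂ → ℂ} (hg : cgQ R g) (z : ℂ) :
    IntegrableOn (fun ζ => g ζ / (ζ - z)) (closedBall (0:ℂ) R) := by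
  have : IntegrableOn (fun ζ : ℂ => (ζ - z)⁻¹) (closedBall (0:ℂ) R) := by
    rw [IntegrableOn, ← integrable_norm_iff (by fun_prop)]
    have h := cg_kernel_int R z
    rw [IntegrableOn] at h
    simpa using h
  have h2 := this.mul_of_top_right hg
  simp only [div_eq_mul_inv]
  exact h2

lemma Tcg_congr {R : ℝ} {g h : ℂ → ℂ} (H : ∀ z ∈ ball (0:ℂ) R, g z = h z) : Tcg R g = Tcg R h := by
  funext z
  unfold Tcg
  congr 1
  rw [setIntegral_congr_set (s := closedBall (0:ℂ) R) (t := ball (0:ℂ) R)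
    (by exact (cg_ball_ae R)),
    setIntegral_congr_set (s := closedBall (0:ℂ) R) (t := ball (0:ℂ) R)
    (by exact (cg_ball_ae R))]
  refine setIntegral_congr_fun measurableSet_ball fun ζ hζ => ?_
  simp only [H ζ hζ]

lemma Tcg_add {R : ℝ} {g h : ℂ → ℂ} (hg : cgQ R g) (hh : cgQ R h) :
    Tcg R (g + h) = Tcg R g + Tcg R h := by
  funext z
  simp only [Tcg, Pi.add_apply, add_div]
  rw [integral_add (cgQ_int hg z) (cgQ_int hh z)]
  ring

lemma Tcg_zero {R : ℝ} : Tcg R 0 = 0 := by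
  funext z; simp [Tcg]

lemma Tcg_Q {R : ℝ} {g : ℂ → ℂ} (hg : cgQ R g) : cgQ R (Tcg R g) := by
  obtain ⟨C, hC⟩ := cg_kernel_bound R
  have hbd : ∀ᵐ ζ ∂(volume.restrict (closedBall (0:ℂ) R)),
      ‖g ζ‖ ≤ (eLpNorm g ∞ (volume.restrict (closedBall (0:ℂ) R))).toReal := by
    have := ae_le_eLpNormEssSup (f := g) (μ := volume.restrict (closedBall (0:ℂ) R))
    filter_upwards [this] with ζ hζ
    rw [← eLpNorm_exponent_top] at hζ
    simpa using ENNReal.toReal_mono hg.2.ne hζ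
  set M := (eLpNorm g ∞ (volume.restrict (closedBall (0:ℂ) R))).toReal with hM
  have hM0 : 0 ≤ M := ENNReal.toReal_nonneg
  refine memLp_top_of_bound ?_ (Real.pi⁻¹ * (M * C)) (Filter.Eventually.of_forall fun z => ?_)
  · have : Tcg R g = fun z => -(Real.pi : ℂ)⁻¹ * ∫ ζ in closedBall (0:ℂ) R, hg.1.mk g ζ / (ζ - z) := by
      funext z
      unfold Tcg
      congr 1
      refine integral_congr_ae ?_
      filter_upwards [hg.1.ae_eq_mk] with ζ hζ
      rw [← hζ]
    rw [this]
    have hm : StronglyMeasurable (fun p : ℂ × ℂ => hg.1.mk g p.2 / (p.2 - p.1)) := by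
      apply Measurable.stronglyMeasurable
      exact (hg.1.stronglyMeasurable_mk.measurable.comp measurable_snd).div (by fun_prop)
    exact (hm.integral_prod_right'.const_mul _).aestronglyMeasurable
  · unfold Tcg
    rw [norm_mul, norm_neg, norm_inv, Complex.norm_real, Real.norm_of_nonneg Real.pi_pos.le]
    gcongr
    calc ‖∫ ζ in closedBall (0:ℂ) R, g ζ / (ζ - z)‖
        ≤ ∫ ζ in closedBall (0:ℂ) R, M * ‖ζ - z‖⁻¹ := by
          refine norm_integral_le_of_norm_le ((cg_kernel_int R z).const_mul M) ?_
          filter_upwards [hbd] with ζ hζ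
          rw [norm_div, div_eq_mul_inv]
          gcongr
      _ = M * ∫ ζ in closedBall (0:ℂ) R, ‖ζ - z‖⁻¹ := integral_const_mul _ _
      _ ≤ M * C := by gcongr; exact hC z

lemma cgQ_of_cont {R : ℝ} {g : ℂ → ℂ} (hg : ContinuousOn g (closedBall (0:ℂ) R)) : cgQ R g := by
  obtain ⟨C, hC⟩ := (isCompact_closedBall (0:ℂ) R).exists_bound_of_continuousOn hg
  refine memLp_top_of_bound (hg.aestronglyMeasurable measurableSet_closedBall) C ?_
  exact (ae_restrict_iff' measurableSet_closedBall).2 (Filter.Eventually.of_forall hC)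

lemma cgQ_congr {R : ℝ} {g h : ℂ → ℂ} (H : ∀ z ∈ ball (0:ℂ) R, g z = h z) (hg : cgQ R g) :
    cgQ R h := by
  refine MemLp.ae_eq ?_ hg
  rw [Measure.restrict_congr_set (cg_ball_ae R)]
  exact (ae_restrict_iff' measurableSet_ball).2 (Filter.Eventually.of_forall H)

lemma cg_exp_conj (t : ℝ) : cexp (t * I) * (starRingEnd ℂ) (cexp (t * I)) = 1 := by
  rw [Complex.mul_conj, Complex.normSq_eq_norm_sq, Complex.norm_exp_ofReal_mul_I]; simp

lemma cg_lin (L : ℂ →L[ℝ] ℂ) (v : ℂ) : L v = v.re * L 1 + v.im * L I := by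
  have : v = v.re • (1:ℂ) + v.im • I := by
    apply Complex.ext <;> simp
  conv_lhs => rw [this]
  rw [map_add, map_smul, map_smul]; simp

lemma cg_lin2 (L : ℂ →L[ℝ] ℂ) (e : ℂ) :
    L e + I * L (I * e) = (starRingEnd ℂ) e * (L 1 + I * L I) := by
  rw [cg_lin L e, cg_lin L (I * e)]
  have : (starRingEnd ℂ) e = e.re - e.im * I := by
    apply Complex.ext <;> simp
  rw [this]
  simp only [Complex.mul_re, Complex.mul_im, Complex.I_re, Complex.I_im]
  push_cast
  linear_combination ((e.im : ℂ) * L I) * Complex.I_mul_I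

noncomputable def cgP (p : ℝ × ℝ) : ℂ := p.1 * cexp (p.2 * I)

lemma cgP_cont : Continuous cgP := by unfold cgP; fun_prop

lemma cgE_hasFDerivAt (p : ℝ × ℝ) :
    HasFDerivAt (fun p : ℝ × ℝ => cexp (p.2 * I))
      ((cexp (p.2 * I) * I) • (ofRealCLM.comp (ContinuousLinearMap.snd ℝ ℝ ℝ))) p := by
  have h0 : HasFDerivAt (fun p : ℝ × ℝ => (p.2 : ℂ)) (ofRealCLM.comp (ContinuousLinearMap.snd ℝ ℝ ℝ)) p :=
    (ofRealCLM.comp (ContinuousLinearMap.snd ℝ ℝ ℝ)).hasFDerivAt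
  have := (h0.mul_const I).cexp
  refine this.congr_fderiv ?_
  rw [smul_smul]

lemma cgP_hasFDerivAt (p : ℝ × ℝ) :
    HasFDerivAt cgP ((p.1 : ℂ) • ((cexp (p.2 * I) * I) • (ofRealCLM.comp (ContinuousLinearMap.snd ℝ ℝ ℝ)))
      + (cexp (p.2 * I)) • (ofRealCLM.comp (ContinuousLinearMap.fst ℝ ℝ ℝ))) p := by
  have h0 : HasFDerivAt (fun p : ℝ × ℝ => (p.1 : ℂ)) (ofRealCLM.comp (ContinuousLinearMap.fst ℝ ℝ ℝ)) p :=
    (ofRealCLM.comp (ContinuousLinearMap.fst ℝ ℝ ℝ)).hasFDerivAt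
  exact h0.mul (cgE_hasFDerivAt p)

lemma cgP_norm (p : ℝ × ℝ) : ‖cgP p‖ = |p.1| := by
  unfold cgP; rw [norm_mul, Complex.norm_exp_ofReal_mul_I]; simp

lemma wDbar_contOn {U : Set ℂ} (hU : IsOpen U) {G : ℂ → ℂ} {n : ℕ} (hG : ContDiffOn ℝ (n+1 : ℕ) G U) :
    ContDiffOn ℝ n (wDbar G) U := by
  have h : ContDiffOn ℝ n (fderiv ℝ G) U := hG.fderiv_of_isOpen hU (by norm_cast)
  unfold wDbar
  exact ((h.clm_apply contDiffOn_const).add (contDiffOn_const.mul (h.clm_apply contDiffOn_const))).div_const 2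

lemma cg_stokes_rect {R : ℝ} (hR : 0 < R) {U : Set ℂ} (hU : IsOpen U) (hDU : closedBall (0:ℂ) R ⊆ U)
    {G : ℂ → ℂ} (hG : ContDiffOn ℝ 1 G U) :
    ∫ x in (0:ℝ)..R, ∫ y in (-Real.pi)..Real.pi, (2 * x * wDbar G (cgP (x, y)) : ℂ) =
      ∫ y in (-Real.pi)..Real.pi, cgP (R, y) * G (cgP (R, y)) := by
  have hmem : ∀ p ∈ Set.uIcc 0 R ×ˢ Set.uIcc (-Real.pi) Real.pi, cgP p ∈ U := by
    intro p hp
    apply hDU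
    rw [Set.uIcc_of_le hR.le] at hp
    rw [mem_closedBall_zero_iff, cgP_norm, abs_of_nonneg hp.1.1]
    exact hp.1.2
  have hcG : ContinuousOn (fun p => G (cgP p)) (Set.uIcc 0 R ×ˢ Set.uIcc (-Real.pi) Real.pi) :=
    hG.continuousOn.comp cgP_cont.continuousOn hmem
  have hcW : ContinuousOn (fun p => wDbar G (cgP p)) (Set.uIcc 0 R ×ˢ Set.uIcc (-Real.pi) Real.pi) :=
    (wDbar_contOn (n := 0) hU (by simpa using hG)).continuousOn.comp cgP_cont.continuousOn hmem
  have hd : ∀ p ∈ Set.uIcc 0 R ×ˢ Set.uIcc (-Real.pi) Real.pi,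
      HasFDerivAt (fun p => G (cgP p)) ((fderiv ℝ G (cgP p)).comp
        ((p.1 : ℂ) • ((cexp (p.2 * I) * I) • (ofRealCLM.comp (ContinuousLinearMap.snd ℝ ℝ ℝ)))
      + (cexp (p.2 * I)) • (ofRealCLM.comp (ContinuousLinearMap.fst ℝ ℝ ℝ)))) p := by
    intro p hp
    have : DifferentiableAt ℝ G (cgP p) :=
      (hG.differentiableOn (by norm_num)).differentiableAt (hU.mem_nhds (hmem p hp))
    exact this.hasFDerivAt.comp p (cgP_hasFDerivAt p)
  have hsub : ∀ p ∈ Set.Ioo (min 0 R) (max 0 R) ×ˢ Set.Ioo (min (-Real.pi) Real.pi) (max (-Real.pi) Real.pi) \ ∅,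
      p ∈ Set.uIcc 0 R ×ˢ Set.uIcc (-Real.pi) Real.pi := by
    intro p hp
    exact ⟨Set.Ioo_subset_Icc_self hp.1.1, Set.Ioo_subset_Icc_self hp.1.2⟩
  have key : ∀ p : ℝ × ℝ, ((cgP p) • ((fderiv ℝ G (cgP p)).comp
        ((p.1 : ℂ) • ((cexp (p.2 * I) * I) • (ofRealCLM.comp (ContinuousLinearMap.snd ℝ ℝ ℝ)))
      + (cexp (p.2 * I)) • (ofRealCLM.comp (ContinuousLinearMap.fst ℝ ℝ ℝ)))) + (G (cgP p)) •
        ((p.1 : ℂ) • ((cexp (p.2 * I) * I) • (ofRealCLM.comp (ContinuousLinearMap.snd ℝ ℝ ℝ)))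
      + (cexp (p.2 * I)) • (ofRealCLM.comp (ContinuousLinearMap.fst ℝ ℝ ℝ)))) (1, 0) +
      (I • ((cexp (p.2 * I)) • ((fderiv ℝ G (cgP p)).comp
        ((p.1 : ℂ) • ((cexp (p.2 * I) * I) • (ofRealCLM.comp (ContinuousLinearMap.snd ℝ ℝ ℝ)))
      + (cexp (p.2 * I)) • (ofRealCLM.comp (ContinuousLinearMap.fst ℝ ℝ ℝ)))) + (G (cgP p)) •
        ((cexp (p.2 * I) * I) • (ofRealCLM.comp (ContinuousLinearMap.snd ℝ ℝ ℝ))))) (0, 1)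
      = 2 * p.1 * wDbar G (cgP p) := by
    intro p
    have h2 := cg_lin2 (fderiv ℝ G (cgP p)) (cexp (p.2 * I))
    have h1 := cg_exp_conj p.2
    have h3 : (fderiv ℝ G (cgP p)) (p.1 * (cexp (p.2 * I) * I)) =
        p.1 * (fderiv ℝ G (cgP p)) (I * cexp (p.2 * I)) := by
      rw [mul_comm (cexp _) I, ← Complex.real_smul, map_smul, Complex.real_smul]
    simp only [_root_.add_apply, _root_.smul_apply,
      ContinuousLinearMap.comp_apply, ContinuousLinearMap.coe_fst', ContinuousLinearMap.coe_snd',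
      ofRealCLM_apply, smul_eq_mul, Complex.ofReal_zero, Complex.ofReal_one, mul_zero, mul_one, zero_add, add_zero, h3]
    unfold wDbar
    unfold cgP at *
    generalize (fderiv ℝ G (p.1 * cexp (p.2 * I))) = L at *
    generalize cexp (p.2 * I) = e at *
    linear_combination (p.1 * e) * h2 + (p.1 * (L 1 + I * L I)) * h1 + (e * G (p.1 * e)) * Complex.I_mul_I
  have := integral2_divergence_prod_of_hasFDerivAt_off_countable
    (fun p => cgP p * G (cgP p)) (fun p => I * (cexp (p.2 * I) * G (cgP p))) _ _ 0 (-Real.pi) R Real.pi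
    ∅ Set.countable_empty
    (cgP_cont.continuousOn.mul hcG)
    (continuousOn_const.mul (ContinuousOn.mul (by fun_prop) hcG))
    (fun p hp => (cgP_hasFDerivAt p).mul (hd p (hsub p hp)))
    (fun p hp => ((cgE_hasFDerivAt p).mul (hd p (hsub p hp))).const_mul I)
    (by
      simp only [key]
      refine ContinuousOn.integrableOn_compact (isCompact_uIcc.prod isCompact_uIcc) ?_
      exact ContinuousOn.mul (by fun_prop) hcW)
  simp only [key] at this
  rw [this]
  have e1 : cexp (Real.pi * I) = -1 := Complex.exp_pi_mul_I
  have e2 : cexp (((-Real.pi : ℝ) : ℂ) * I) = -1 := by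
    push_cast; rw [neg_mul, Complex.exp_neg, e1]; norm_num
  simp only [cgP, e1, e2]
  simp

lemma cg_stokes {R : ℝ} (hR : 0 < R) {U : Set ℂ} (hU : IsOpen U) (hDU : closedBall (0:ℂ) R ⊆ U)
    {G : ℂ → ℂ} (hG : ContDiffOn ℝ 1 G U) :
    ∫ ζ in closedBall (0:ℂ) R, wDbar G ζ = (2 * I)⁻¹ * ∮ ζ in C(0, R), G ζ := by
  have h1 := cg_stokes_rect hR hU hDU hG
  have hcirc : ∮ ζ in C(0, R), G ζ = I * ∫ y in (-Real.pi)..Real.pi, cgP (R, y) * G (cgP (R, y)) := by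
    rw [circleIntegral, ← intervalIntegral.integral_const_mul]
    have hp : Function.Periodic (fun y : ℝ => I * (cgP (R, y) * G (cgP (R, y)))) (2 * Real.pi) := by
      intro y
      have : cgP (R, y + 2 * Real.pi) = cgP (R, y) := by
        have := periodic_circleMap 0 R y
        simpa [circleMap, cgP] using this
      simp only [this]
    have := hp.intervalIntegral_add_eq 0 (-Real.pi)
    rw [zero_add, show -Real.pi + 2 * Real.pi = Real.pi by ring] at this
    rw [← this]
    refine intervalIntegral.integral_congr fun y _ => ?_
    simp [circleMap, cgP]; ring
  have hpol : ∫ ζ in closedBall (0:ℂ) R, wDbar G ζ =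
      ∫ x in (0:ℝ)..R, ∫ y in (-Real.pi)..Real.pi, (x * wDbar G (cgP (x, y)) : ℂ) := by
    have hsymm : ∀ p : ℝ × ℝ, Complex.polarCoord.symm p = cgP p := by
      intro p
      rw [Complex.polarCoord_symm_apply, cgP, Complex.exp_mul_I]
      push_cast; rfl
    rw [← integral_indicator measurableSet_closedBall, ← Complex.integral_comp_polarCoord_symm,
      polarCoord_target]
    have : ∀ p ∈ Set.Ioi (0:ℝ) ×ˢ Set.Ioo (-Real.pi) Real.pi,
        p.1 • (closedBall (0:ℂ) R).indicator (fun ζ => wDbar G ζ) (Complex.polarCoord.symm p) =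
        (Set.Iic R ×ˢ Set.univ).indicator (fun p : ℝ × ℝ => (p.1 * wDbar G (cgP p) : ℂ)) p := by
      intro p hp
      have hp1 : 0 < p.1 := hp.1
      rw [hsymm]
      by_cases h : p.1 ≤ R
      · rw [Set.indicator_of_mem, Set.indicator_of_mem]
        · simp
        · exact ⟨h, trivial⟩
        · rw [mem_closedBall_zero_iff, cgP_norm, abs_of_pos hp1]; exact h
      · rw [Set.indicator_of_notMem, Set.indicator_of_notMem]
        · simp
        · exact fun h' => h h'.1
        · rw [mem_closedBall_zero_iff, cgP_norm, abs_of_pos hp1]; exact h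
    rw [setIntegral_congr_fun (measurableSet_Ioi.prod measurableSet_Ioo) this,
      setIntegral_indicator (measurableSet_Iic.prod MeasurableSet.univ), Set.prod_inter_prod,
      Set.inter_univ, Set.Ioi_inter_Iic, Measure.volume_eq_prod, setIntegral_prod]
    · rw [intervalIntegral.integral_of_le hR.le]
      refine setIntegral_congr_fun measurableSet_Ioc fun x _ => ?_
      simp only
      rw [intervalIntegral.integral_of_le (by linarith [Real.pi_pos]), integral_Ioc_eq_integral_Ioo]
    · have : ContinuousOn (fun p : ℝ × ℝ => (p.1 * wDbar G (cgP p) : ℂ)) (Set.Icc 0 R ×ˢ Set.Icc (-Real.pi) Real.pi) := by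
        refine ContinuousOn.mul (by fun_prop) ?_
        refine (wDbar_contOn (n := 0) hU (by simpa using hG)).continuousOn.comp cgP_cont.continuousOn ?_
        intro p hp
        apply hDU
        rw [mem_closedBall_zero_iff, cgP_norm, abs_of_nonneg hp.1.1]
        exact hp.1.2
      rw [← Measure.volume_eq_prod]
      refine (this.integrableOn_compact (isCompact_Icc.prod isCompact_Icc)).mono_set ?_
      exact Set.prod_mono Set.Ioc_subset_Icc_self Set.Ioo_subset_Icc_self
  rw [hcirc, ← h1, hpol]
  simp only [mul_assoc, intervalIntegral.integral_const_mul]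
  field_simp

lemma wDbar_mul {a b : ℂ → ℂ} {z : ℂ} (ha : DifferentiableAt ℝ a z) (hb : DifferentiableAt ℝ b z) :
    wDbar (fun w => a w * b w) z = wDbar a z * b z + a z * wDbar b z := by
  unfold wDbar
  rw [fderiv_fun_mul ha hb]
  simp only [_root_.add_apply, _root_.smul_apply, smul_eq_mul]
  ring

lemma wDbar_inv {a : ℂ → ℂ} {z : ℂ} (ha : DifferentiableAt ℝ a z) (h0 : a z ≠ 0) :
    wDbar (fun w => (a w)⁻¹) z = - wDbar a z / (a z) ^ 2 := by
  have hb : DifferentiableAt ℝ (fun w => (a w)⁻¹) z := ha.inv h0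
  have h := wDbar_mul ha hb
  have h1 : wDbar (fun w => a w * (a w)⁻¹) z = 0 := by
    have he : (fun w => a w * (a w)⁻¹) =ᶠ[nhds z] fun _ => (1:ℂ) := by
      filter_upwards [ha.continuousAt.eventually_ne h0] with w hw
      exact mul_inv_cancel₀ hw
    unfold wDbar
    rw [he.fderiv_eq]; simp
  rw [h1] at h
  have h2 : a z * wDbar (fun w => (a w)⁻¹) z = - (wDbar a z * (a z)⁻¹) := by linear_combination -h
  field_simp
  field_simp at h2
  linear_combination h2

lemma wDbar_sub_const (a : ℂ → ℂ) (c z : ℂ) : wDbar (fun w => a w - c) z = wDbar a z := by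
  unfold wDbar; rw [fderiv_sub_const]

lemma wDbar_add_const (a : ℂ → ℂ) (c z : ℂ) : wDbar (fun w => a w + c) z = wDbar a z := by
  unfold wDbar; rw [fderiv_add_const]

lemma wDbar_id (z : ℂ) : wDbar (fun w => w) z = 0 := by
  unfold wDbar; rw [fderiv_fun_id]; simp

lemma wDbar_conj (z : ℂ) : wDbar (fun w => (starRingEnd ℂ) w) z = 1 := by
  unfold wDbar
  have : HasFDerivAt (fun w => (starRingEnd ℂ) w) (conjCLE : ℂ →L[ℝ] ℂ) z := conjCLE.hasFDerivAt
  rw [this.fderiv]; simp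

/-- regularised Cauchy kernel -/
noncomputable def cgK (z : ℂ) (ε : ℝ) (ζ : ℂ) : ℂ :=
  ((starRingEnd ℂ) ζ - (starRingEnd ℂ) z) *
    ((ζ - z) * ((starRingEnd ℂ) ζ - (starRingEnd ℂ) z) + ε)⁻¹

lemma cgK_den (z : ℂ) (ε : ℝ) (ζ : ℂ) :
    ((ζ - z) * ((starRingEnd ℂ) ζ - (starRingEnd ℂ) z) + ε) = ((‖ζ - z‖ ^ 2 + ε : ℝ) : ℂ) := by
  rw [← map_sub, Complex.mul_conj, Complex.normSq_eq_norm_sq]; push_cast; rfl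

lemma cgK_den_ne (z : ℂ) {ε : ℝ} (hε : 0 < ε) (ζ : ℂ) :
    ((ζ - z) * ((starRingEnd ℂ) ζ - (starRingEnd ℂ) z) + ε) ≠ 0 := by
  rw [cgK_den]; norm_cast; positivity

lemma cg_conj_contDiff : ContDiff ℝ 1 (fun w : ℂ => (starRingEnd ℂ) w) := conjCLE.contDiff

lemma cgK_contDiff (z : ℂ) {ε : ℝ} (hε : 0 < ε) : ContDiff ℝ 1 (cgK z ε) := by
  have h1 : ContDiff ℝ 1 (fun ζ : ℂ => (starRingEnd ℂ) ζ - (starRingEnd ℂ) z) :=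
    cg_conj_contDiff.sub contDiff_const
  refine h1.mul (ContDiff.inv ?_ (cgK_den_ne z hε))
  exact ((contDiff_id.sub contDiff_const).mul h1).add contDiff_const

lemma cgK_wDbar (z : ℂ) {ε : ℝ} (hε : 0 < ε) (ζ : ℂ) :
    wDbar (cgK z ε) ζ = ε * (((ζ - z) * ((starRingEnd ℂ) ζ - (starRingEnd ℂ) z) + ε)⁻¹) ^ 2 := by
  have hc : DifferentiableAt ℝ (fun ζ : ℂ => (starRingEnd ℂ) ζ - (starRingEnd ℂ) z) ζ :=
    (cg_conj_contDiff.sub contDiff_const).differentiable (by norm_num) ζ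
  have hs : DifferentiableAt ℝ (fun ζ : ℂ => ζ - z) ζ := by fun_prop
  have hd : DifferentiableAt ℝ
      (fun ζ : ℂ => (ζ - z) * ((starRingEnd ℂ) ζ - (starRingEnd ℂ) z) + ε) ζ :=
    (hs.mul hc).add_const _
  have h0 := cgK_den_ne z hε ζ
  have hi : DifferentiableAt ℝ
      (fun ζ : ℂ => ((ζ - z) * ((starRingEnd ℂ) ζ - (starRingEnd ℂ) z) + ε)⁻¹) ζ := hd.inv h0
  unfold cgK
  rw [wDbar_mul hc hi, wDbar_inv hd h0, wDbar_add_const, wDbar_mul hs hc, wDbar_sub_const,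
    wDbar_sub_const, wDbar_conj, wDbar_id]
  field_simp
  ring

lemma cgK_den_norm (z : ℂ) {ε : ℝ} (hε : 0 < ε) (ζ : ℂ) :
    ‖((ζ - z) * ((starRingEnd ℂ) ζ - (starRingEnd ℂ) z) + ε)⁻¹‖ = (‖ζ - z‖ ^ 2 + ε)⁻¹ := by
  rw [cgK_den, norm_inv, Complex.norm_real, Real.norm_of_nonneg (by positivity)]

lemma cg_real_bd {x ε : ℝ} (hx : 0 ≤ x) (hε : 0 < ε) : x * (x ^ 2 + ε)⁻¹ ≤ x⁻¹ := by
  rcases hx.eq_or_lt with rfl | hx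
  · simp
  · rw [← div_eq_mul_inv, div_le_iff₀ (by positivity)]
    field_simp
    linarith

lemma cgK_norm (z : ℂ) {ε : ℝ} (hε : 0 < ε) (ζ : ℂ) : ‖cgK z ε ζ‖ ≤ ‖ζ - z‖⁻¹ := by
  unfold cgK
  rw [norm_mul, cgK_den_norm z hε, ← map_sub, Complex.norm_conj]
  exact cg_real_bd (norm_nonneg _) hε

lemma cgK_wDbar_norm (z : ℂ) {ε : ℝ} (hε : 0 < ε) (ζ : ℂ) :
    ‖ζ - z‖ * ‖wDbar (cgK z ε) ζ‖ ≤ ‖ζ - z‖⁻¹ := by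
  rw [cgK_wDbar z hε, norm_mul, norm_pow, cgK_den_norm z hε, Complex.norm_real,
    Real.norm_of_nonneg hε.le]
  refine le_trans ?_ (cg_real_bd (norm_nonneg (ζ - z)) hε)
  gcongr
  have h : 0 < ‖ζ - z‖ ^ 2 + ε := by positivity
  rw [pow_two, ← mul_assoc]
  refine mul_le_of_le_one_left (by positivity) ?_
  rw [← div_eq_mul_inv, div_le_one h]
  nlinarith [sq_nonneg ‖ζ - z‖]

lemma cg_den_tendsto {z ζ : ℂ} (h : ζ ≠ z) {e : ℕ → ℝ} (he : Filter.Tendsto e Filter.atTop (nhds 0)) :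
    Filter.Tendsto (fun n => ((ζ - z) * ((starRingEnd ℂ) ζ - (starRingEnd ℂ) z) + e n)⁻¹)
      Filter.atTop (nhds ((ζ - z) * ((starRingEnd ℂ) ζ - (starRingEnd ℂ) z))⁻¹) := by
  have h1 : ζ - z ≠ 0 := sub_ne_zero.2 h
  have h2 : (ζ - z) * ((starRingEnd ℂ) ζ - (starRingEnd ℂ) z) ≠ 0 := by
    rw [← map_sub]; exact mul_ne_zero h1 ((map_ne_zero _).2 h1)
  refine Filter.Tendsto.inv₀ ?_ h2
  have : Filter.Tendsto (fun n => ((e n : ℝ) : ℂ)) Filter.atTop (nhds 0) := by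
    have := (Complex.continuous_ofReal.tendsto 0).comp he
    rw [Complex.ofReal_zero] at this
    exact this
  simpa using this.const_add ((ζ - z) * ((starRingEnd ℂ) ζ - (starRingEnd ℂ) z))

lemma cgK_tendsto {z ζ : ℂ} (h : ζ ≠ z) {e : ℕ → ℝ} (he : Filter.Tendsto e Filter.atTop (nhds 0)) :
    Filter.Tendsto (fun n => cgK z (e n) ζ) Filter.atTop (nhds (ζ - z)⁻¹) := by
  have h1 : ζ - z ≠ 0 := sub_ne_zero.2 h
  have h2 : (starRingEnd ℂ) ζ - (starRingEnd ℂ) z ≠ 0 := by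
    rw [← map_sub]; exact (map_ne_zero _).2 h1
  have := (cg_den_tendsto h he).const_mul ((starRingEnd ℂ) ζ - (starRingEnd ℂ) z)
  have h3 : ((starRingEnd ℂ) ζ - (starRingEnd ℂ) z) *
      ((ζ - z) * ((starRingEnd ℂ) ζ - (starRingEnd ℂ) z))⁻¹ = (ζ - z)⁻¹ := by
    rw [mul_inv, mul_comm (ζ - z)⁻¹, ← mul_assoc, mul_inv_cancel₀ h2, one_mul]
  rw [h3] at this
  exact this

lemma cgK_wDbar_tendsto {z ζ : ℂ} (h : ζ ≠ z) {e : ℕ → ℝ} (hp : ∀ n, 0 < e n)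
    (he : Filter.Tendsto e Filter.atTop (nhds 0)) :
    Filter.Tendsto (fun n => wDbar (cgK z (e n)) ζ) Filter.atTop (nhds 0) := by
  have : Filter.Tendsto (fun n => ((e n : ℝ) : ℂ)) Filter.atTop (nhds 0) := by
    have := (Complex.continuous_ofReal.tendsto 0).comp he
    rw [Complex.ofReal_zero] at this
    exact this
  have h3 := this.mul ((cg_den_tendsto h he).pow 2)
  rw [zero_mul] at h3
  refine h3.congr fun n => ?_
  rw [cgK_wDbar z (hp n)]

/-- Cauchy–Green (Cauchy–Pompeiu) formula on the disk. -/
lemma cauchy_green {R : ℝ} (hR : 0 < R) {U : Set ℂ} (hU : IsOpen U) (hDU : closedBall (0:ℂ) R ⊆ U)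
    {g : ℂ → ℂ} (hg : ContDiffOn ℝ 1 g U) {z : ℂ} (hz : z ∈ ball (0:ℂ) R) :
    Tcg R (wDbar g) z = g z - Scau R g z := by
  have hdiff : ∀ x ∈ U, DifferentiableAt ℝ g x := fun x hx =>
    (hg.differentiableOn (by norm_num)).differentiableAt (hU.mem_nhds hx)
  have hcd : ContinuousOn (fderiv ℝ g) (closedBall (0:ℂ) R) :=
    (hg.continuousOn_fderiv_of_isOpen hU le_rfl).mono hDU
  have hcw : ContinuousOn (wDbar g) (closedBall (0:ℂ) R) :=
    (wDbar_contOn (n := 0) hU (by simpa using hg)).continuousOn.mono hDU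
  obtain ⟨L, hL⟩ := (isCompact_closedBall (0:ℂ) R).exists_bound_of_continuousOn hcd
  obtain ⟨M, hM⟩ := (isCompact_closedBall (0:ℂ) R).exists_bound_of_continuousOn hcw
  have hzD : z ∈ closedBall (0:ℂ) R := ball_subset_closedBall hz
  have hL0 : 0 ≤ L := (norm_nonneg _).trans (hL z hzD)
  have hLip : ∀ ζ ∈ closedBall (0:ℂ) R, ‖g ζ - g z‖ ≤ L * ‖ζ - z‖ := fun ζ hζ =>
    (convex_closedBall (0:ℂ) R).norm_image_sub_le_of_norm_fderiv_le
      (fun x hx => hdiff x (hDU hx)) hL hzD hζ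
  set e : ℕ → ℝ := fun n => 1 / ((n : ℝ) + 1) with he_def
  have hp : ∀ n, 0 < e n := fun n => by positivity
  have he : Filter.Tendsto e Filter.atTop (nhds 0) := tendsto_one_div_add_atTop_nhds_zero_nat
  have hst : ∀ n, ∫ ζ in closedBall (0:ℂ) R, wDbar (fun w => (g w - g z) * cgK z (e n) w) ζ =
      (2 * I)⁻¹ * ∮ ζ in C(0, R), (g ζ - g z) * cgK z (e n) ζ := fun n =>
    cg_stokes hR hU hDU ((hg.sub contDiffOn_const).mul (cgK_contDiff z (hp n)).contDiffOn)
  have hform : ∀ n, ∀ ζ ∈ closedBall (0:ℂ) R, wDbar (fun w => (g w - g z) * cgK z (e n) w) ζ =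
      wDbar g ζ * cgK z (e n) ζ + (g ζ - g z) * wDbar (cgK z (e n)) ζ := by
    intro n ζ hζ
    rw [wDbar_mul ((hdiff ζ (hDU hζ)).sub_const _)
      ((cgK_contDiff z (hp n)).differentiable (by norm_num) ζ), wDbar_sub_const]
  have hne : ∀ᵐ ζ ∂(volume.restrict (closedBall (0:ℂ) R)), ζ ≠ z := by
    refine ae_restrict_of_ae ?_
    rw [ae_iff]; simp
  have hmemD : ∀ᵐ ζ ∂(volume.restrict (closedBall (0:ℂ) R)), ζ ∈ closedBall (0:ℂ) R :=
    ae_restrict_mem measurableSet_closedBall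
  have lim1 : Filter.Tendsto
      (fun n => ∫ ζ in closedBall (0:ℂ) R, wDbar (fun w => (g w - g z) * cgK z (e n) w) ζ)
      Filter.atTop (nhds (∫ ζ in closedBall (0:ℂ) R, wDbar g ζ / (ζ - z))) := by
    refine tendsto_integral_of_dominated_convergence (fun ζ => (M + L) * ‖ζ - z‖⁻¹) ?_ ?_ ?_ ?_
    · intro n
      refine ContinuousOn.aestronglyMeasurable ?_ measurableSet_closedBall
      have h := wDbar_contOn (n := 0) (G := fun w => (g w - g z) * cgK z (e n) w) hU
        (by simpa using ((hg.sub contDiffOn_const).mul (cgK_contDiff z (hp n)).contDiffOn))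
      exact h.continuousOn.mono hDU
    · exact (cg_kernel_int R z).const_mul _
    · intro n
      filter_upwards [hmemD] with ζ hζ
      rw [hform n ζ hζ]
      refine (norm_add_le _ _).trans ?_
      rw [norm_mul, norm_mul, add_mul]
      refine add_le_add ?_ ?_
      · exact mul_le_mul (hM ζ hζ) (cgK_norm z (hp n) ζ) (norm_nonneg _)
          ((norm_nonneg _).trans (hM ζ hζ))
      · calc ‖g ζ - g z‖ * ‖wDbar (cgK z (e n)) ζ‖ ≤ L * ‖ζ - z‖ * ‖wDbar (cgK z (e n)) ζ‖ := by
              gcongr; exact hLip ζ hζ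
          _ ≤ L * ‖ζ - z‖⁻¹ := by
              rw [mul_assoc]; gcongr; exact cgK_wDbar_norm z (hp n) ζ
    · filter_upwards [hmemD, hne] with ζ hζ hζz
      simp only [hform _ ζ hζ]
      have := ((cgK_tendsto hζz he).const_mul (wDbar g ζ)).add
        ((cgK_wDbar_tendsto hζz hp he).const_mul (g ζ - g z))
      simpa [div_eq_mul_inv] using this
  have hcm : ∀ θ : ℝ, circleMap 0 R θ ∈ closedBall (0:ℂ) R := fun θ =>
    circleMap_mem_closedBall 0 hR.le θ
  have hcne : ∀ θ : ℝ, circleMap 0 R θ ≠ z := fun θ h => by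
    have := circleMap_notMem_ball 0 R θ
    rw [h] at this
    exact this hz
  have hgc : Continuous (fun θ : ℝ => g (circleMap 0 R θ)) :=
    hg.continuousOn.comp_continuous (continuous_circleMap 0 R) (fun θ => hDU (hcm θ))
  have lim2 : Filter.Tendsto (fun n => ∮ ζ in C(0, R), (g ζ - g z) * cgK z (e n) ζ)
      Filter.atTop (nhds (∮ ζ in C(0, R), (g ζ - g z) * (ζ - z)⁻¹)) := by
    simp only [circleIntegral]
    refine intervalIntegral.tendsto_integral_filter_of_dominated_convergence (fun _ => R * L) ?_ ?_ ?_ ?_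
    · refine Filter.Eventually.of_forall fun n => Continuous.aestronglyMeasurable ?_
      simp only [deriv_circleMap]
      have h2 := (cgK_contDiff z (hp n)).continuous.comp (continuous_circleMap 0 R)
      exact ((continuous_circleMap 0 R).mul continuous_const).smul
        ((hgc.sub continuous_const).mul h2)
    · refine Filter.Eventually.of_forall fun n => Filter.Eventually.of_forall fun θ _ => ?_
      rw [norm_smul, deriv_circleMap, norm_mul, norm_circleMap_zero, Complex.norm_I, mul_one,
        abs_of_pos hR]
      gcongr
      rw [norm_mul]
      have h0 : 0 < ‖circleMap 0 R θ - z‖ := norm_pos_iff.2 (sub_ne_zero.2 (hcne θ))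
      calc _ ≤ L * ‖circleMap 0 R θ - z‖ * ‖circleMap 0 R θ - z‖⁻¹ := by
            gcongr
            · exact hLip _ (hcm θ)
            · exact cgK_norm z (hp n) _
        _ = L := by field_simp
    · simp
    · refine Filter.Eventually.of_forall fun θ _ => ?_
      exact ((cgK_tendsto (hcne θ) he).const_mul _).const_smul _
  have hEq := tendsto_nhds_unique lim1 (by
    simp only [hst]
    exact lim2.const_mul _)
  have hsplit : ∮ ζ in C(0, R), (g ζ - g z) * (ζ - z)⁻¹ =
      (∮ ζ in C(0, R), g ζ / (ζ - z)) - 2 * Real.pi * I * g z := by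
    have hk : Continuous (fun θ : ℝ => (circleMap 0 R θ - z)⁻¹) :=
      ((continuous_circleMap 0 R).sub continuous_const).inv₀ (fun θ => sub_ne_zero.2 (hcne θ))
    have i1 : CircleIntegrable (fun ζ => g ζ * (ζ - z)⁻¹) 0 R :=
      (hgc.mul hk).intervalIntegrable _ _
    have i2 : CircleIntegrable (fun ζ => g z * (ζ - z)⁻¹) 0 R :=
      (continuous_const.mul hk).intervalIntegrable _ _
    have h3 : ∮ ζ in C(0, R), (ζ - z)⁻¹ = 2 * Real.pi * I :=
      circleIntegral.integral_sub_inv_of_mem_ball hz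
    simp only [sub_mul, div_eq_mul_inv]
    rw [circleIntegral.integral_sub i1 i2, circleIntegral.integral_const_mul, h3]
    ring
  unfold Tcg Scau
  rw [hEq, hsplit]
  have : (Real.pi : ℂ) ≠ 0 := by exact_mod_cast Real.pi_ne_zero
  field_simp
  ring

lemma cgQ_add {R : ℝ} {g h : ℂ → ℂ} (hg : cgQ R g) (hh : cgQ R h) : cgQ R (g + h) := MemLp.add hg hh

lemma cgQ_sub {R : ℝ} {g h : ℂ → ℂ} (hg : cgQ R g) (hh : cgQ R h) : cgQ R (g - h) := MemLp.sub hg hh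

lemma cgQ_zero {R : ℝ} : cgQ R 0 := MemLp.zero

lemma cgQ_conj {R : ℝ} {g : ℂ → ℂ} (hg : cgQ R g) : cgQ R (fun w => (starRingEnd ℂ) (g w)) :=
  MemLp.star hg

lemma cgQ_sum {R : ℝ} {F : ℕ → ℂ → ℂ} (n : ℕ) (hF : ∀ j < n, cgQ R (F j)) :
    cgQ R (∑ j ∈ Finset.range n, F j) := by
  induction n with
  | zero => simpa using cgQ_zero
  | succ n ih =>
    rw [Finset.sum_range_succ]
    exact cgQ_add (ih fun j hj => hF j (by omega)) (hF n (by omega))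

lemma Tit_Q {R : ℝ} {g : ℂ → ℂ} (hg : cgQ R g) (n : ℕ) : cgQ R ((Tcg R)^[n] g) := by
  induction n with
  | zero => exact hg
  | succ n ih => rw [Function.iterate_succ_apply']; exact Tcg_Q ih

lemma Tit_congr {R : ℝ} {g h : ℂ → ℂ} (H : ∀ z ∈ ball (0:ℂ) R, g z = h z) (n : ℕ) :
    ∀ z ∈ ball (0:ℂ) R, (Tcg R)^[n] g z = (Tcg R)^[n] h z := by
  cases n with
  | zero => exact H
  | succ n => intro z _; rw [Function.iterate_succ_apply, Function.iterate_succ_apply, Tcg_congr H]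

lemma Tit_add {R : ℝ} {g h : ℂ → ℂ} (hg : cgQ R g) (hh : cgQ R h) (n : ℕ) :
    (Tcg R)^[n] (g + h) = (Tcg R)^[n] g + (Tcg R)^[n] h := by
  induction n with
  | zero => rfl
  | succ n ih =>
    simp only [Function.iterate_succ_apply', ih]
    exact Tcg_add (Tit_Q hg n) (Tit_Q hh n)

lemma Tit_zero {R : ℝ} (n : ℕ) : (Tcg R)^[n] 0 = 0 := by
  induction n with
  | zero => rfl
  | succ n ih => rw [Function.iterate_succ_apply', ih, Tcg_zero]

lemma Tit_sum {R : ℝ} {F : ℕ → ℂ → ℂ} (k n : ℕ) (hF : ∀ j < n, cgQ R (F j)) :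
    (Tcg R)^[k] (∑ j ∈ Finset.range n, F j) = ∑ j ∈ Finset.range n, (Tcg R)^[k] (F j) := by
  induction n with
  | zero => simpa using Tit_zero k
  | succ n ih =>
    rw [Finset.sum_range_succ, Finset.sum_range_succ,
      Tit_add (cgQ_sum n fun j hj => hF j (by omega)) (hF n (by omega)), ih fun j hj => hF j (by omega)]

lemma wDbar_it_cont {U : Set ℂ} (hU : IsOpen U) {G : ℂ → ℂ} {n : ℕ} (j : ℕ)
    (hG : ContDiffOn ℝ (n + j : ℕ) G U) : ContDiffOn ℝ n (wDbar^[j] G) U := by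
  induction j generalizing G with
  | zero => simpa using hG
  | succ j ih => rw [Function.iterate_succ_apply]; exact ih (wDbar_contOn hU hG)

lemma Scau_Q {R : ℝ} (hR : 0 < R) {U : Set ℂ} (hU : IsOpen U) (hDU : closedBall (0:ℂ) R ⊆ U)
    {g : ℂ → ℂ} (hg : ContDiffOn ℝ 1 g U) : cgQ R (Scau R g) := by
  have h1 : cgQ R g := cgQ_of_cont (hg.continuousOn.mono hDU)
  have h2 : cgQ R (wDbar g) := cgQ_of_cont
    ((wDbar_contOn (n := 0) hU (by simpa using hg)).continuousOn.mono hDU)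
  refine cgQ_congr (g := g - Tcg R (wDbar g)) (fun z hz => ?_) (cgQ_sub h1 (Tcg_Q h2))
  rw [Pi.sub_apply, cauchy_green hR hU hDU hg hz]; ring

lemma cg_iter {R : ℝ} (hR : 0 < R) {U : Set ℂ} (hU : IsOpen U) (hDU : closedBall (0:ℂ) R ⊆ U)
    (n : ℕ) {g : ℂ → ℂ} (hg : ContDiffOn ℝ n g U) :
    ∀ z ∈ ball (0:ℂ) R, g z =
      (∑ j ∈ Finset.range n, (Tcg R)^[j] (Scau R (wDbar^[j] g))) z + (Tcg R)^[n] (wDbar^[n] g) z := by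
  induction n with
  | zero => intro z _; simp
  | succ n ih =>
    intro z hz
    have hC1 : ContDiffOn ℝ 1 (wDbar^[n] g) U := by
      have := wDbar_it_cont hU (n := 1) n (by rwa [add_comm 1 n])
      simpa using this
    have hQ2 : cgQ R (wDbar (wDbar^[n] g)) := cgQ_of_cont
      ((wDbar_contOn (n := 0) hU (by simpa using hC1)).continuousOn.mono hDU)
    rw [ih (hg.of_le (by norm_cast; omega)) z hz, Finset.sum_range_succ, Pi.add_apply, add_assoc]
    congr 1
    rw [Tit_congr (h := Scau R (wDbar^[n] g) + Tcg R (wDbar (wDbar^[n] g))) ?_ n z hz,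
      Tit_add (Scau_Q hR hU hDU hC1) (Tcg_Q hQ2), Pi.add_apply, Function.iterate_succ_apply,
      Function.iterate_succ_apply' wDbar]
    intro w hw
    rw [Pi.add_apply, cauchy_green hR hU hDU hC1 hw]; ring

/-- pointwise conjugate -/
def cgc (g : ℂ → ℂ) : ℂ → ℂ := fun w => (starRingEnd ℂ) (g w)

lemma cgc_cgc (g : ℂ → ℂ) : cgc (cgc g) = g := by funext w; simp [cgc]

lemma Tbar_it (R : ℝ) (g : ℂ → ℂ) (n : ℕ) : (Tcgbar R)^[n] g = cgc ((Tcg R)^[n] (cgc g)) := by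
  induction n with
  | zero => exact (cgc_cgc g).symm
  | succ n ih =>
    rw [Function.iterate_succ_apply', ih, Function.iterate_succ_apply']
    change cgc (Tcg R (cgc (cgc _))) = _
    rw [cgc_cgc]

lemma wDbar_cgc (g : ℂ → ℂ) : wDbar (cgc g) = cgc (wD g) := by
  funext z
  have : fderiv ℝ (cgc g) z = (conjCLE : ℂ →L[ℝ] ℂ).comp (fderiv ℝ g z) :=
    conjCLE.comp_fderiv (f := g) (x := z)
  unfold wDbar
  rw [this]
  have h2 : (starRingEnd ℂ) (2:ℂ) = 2 := Complex.conj_ofNat 2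
  simp [cgc, wD, h2]

lemma wDbar_it_cgc (g : ℂ → ℂ) (n : ℕ) : wDbar^[n] (cgc g) = cgc (wD^[n] g) := by
  induction n with
  | zero => rfl
  | succ n ih => rw [Function.iterate_succ_apply', ih, wDbar_cgc, Function.iterate_succ_apply']

lemma cgc_contDiffOn {U : Set ℂ} {n : ℕ} {g : ℂ → ℂ} (hg : ContDiffOn ℝ n g U) :
    ContDiffOn ℝ n (cgc g) U := conjCLE.contDiff.comp_contDiffOn hg


/-- iterated Cauchy–Green representation formula for `f ∈ C^{m+α}(D)`,
`μ, ν ≥ 1`, `μ + ν = m`. -/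
theorem iterated_cauchy_green_formula (α R : ℝ) (hα : α ∈ Set.Ioo (0:ℝ) 1) (hR : 0 < R)
    (m μ ν : ℕ) (hμ : 1 ≤ μ) (hν : 1 ≤ ν) (hμν : μ + ν = m)
    (f : ℂ → ℂ) (hf : CkHolder m α R f) :
    ∀ z ∈ ball (0:ℂ) R,
      (Tcg R)^[ν] ((Tcgbar R)^[μ] (wDij μ ν f)) z
        = f z - (∑ j ∈ Finset.range ν, (Tcg R)^[j] (Scau R (wDij 0 j f)) z)
            - ∑ j ∈ Finset.range μ, (Tcg R)^[ν] ((Tcgbar R)^[j] (Scaubar R (wDij j ν f))) z := by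
  intro z hz
  obtain ⟨⟨U, hU, hDU, hfU⟩, -⟩ := hf
  subst hμν
  have hfν : ContDiffOn ℝ ν f U := hfU.of_le (by norm_cast; omega)
  have hh : ContDiffOn ℝ μ (wDbar^[ν] f) U := wDbar_it_cont hU ν hfU
  set h := wDbar^[ν] f with hh_def
  have hch := cgc_contDiffOn hh
  have hS : ∀ j < μ, cgQ R (Scau R (wDbar^[j] (cgc h))) := by
    intro j hj
    refine Scau_Q hR hU hDU ?_
    have := wDbar_it_cont hU (n := 1) j (hch.of_le (by norm_cast; omega))
    simpa using this
  have hTS : ∀ j < μ, cgQ R ((Tcgbar R)^[j] (Scaubar R (wDij j ν f))) := by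
    intro j hj
    rw [Tbar_it]
    refine cgQ_conj (Tit_Q ?_ j)
    change cgQ R (cgc (cgc (Scau R (cgc (wD^[j] h)))))
    rw [cgc_cgc, ← wDbar_it_cgc]
    exact hS j hj
  have hTQ : cgQ R ((Tcgbar R)^[μ] (wDij μ ν f)) := by
    rw [Tbar_it]
    refine cgQ_conj (Tit_Q ?_ μ)
    change cgQ R (cgc (wD^[μ] h))
    rw [← wDbar_it_cgc]
    have := wDbar_it_cont hU (n := 0) (G := cgc h) μ (by simpa using hch)
    exact cgQ_of_cont (this.continuousOn.mono hDU)
  have key : ∀ w ∈ ball (0:ℂ) R, h w =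
      ((∑ j ∈ Finset.range μ, (Tcgbar R)^[j] (Scaubar R (wDij j ν f))) +
        (Tcgbar R)^[μ] (wDij μ ν f)) w := by
    intro w hw
    have h1 := congrArg (starRingEnd ℂ) (cg_iter hR hU hDU μ hch w hw)
    rw [Pi.add_apply, Finset.sum_apply]
    rw [map_add, Finset.sum_apply, map_sum] at h1
    have h2 : (starRingEnd ℂ) (cgc h w) = h w := congrFun (cgc_cgc h) w
    rw [h2] at h1
    rw [h1]
    congr 1
    · refine Finset.sum_congr rfl fun j _ => ?_
      rw [Tbar_it]
      change _ = cgc ((Tcg R)^[j] (cgc (cgc (Scau R (cgc (wD^[j] h)))))) w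
      rw [cgc_cgc, ← wDbar_it_cgc]
      rfl
    · rw [Tbar_it]
      change _ = cgc ((Tcg R)^[μ] (cgc (wD^[μ] h))) w
      rw [← wDbar_it_cgc]
      rfl
  have hmain := cg_iter hR hU hDU ν hfν z hz
  rw [← hh_def, Tit_congr key ν z hz, Tit_add (cgQ_sum μ hTS) hTQ, Tit_sum ν μ hTS, Pi.add_apply,
    Finset.sum_apply, Finset.sum_apply] at hmain
  rw [hmain]
  have : ∀ j, wDij 0 j f = wDbar^[j] f := fun j => rfl
  simp only [this]
  ring
end

section
/- Let k ≥ 0 be an integer and α ∈ (0,1). There is a constant C, depending only on k and α, such that for every R > 0 and every f of class C^{k+α}(D), the α-Hölder constant on the open disk {|z| < R} of the k-th complex derivative of S_b f satisfies H_α[∂^k S_b f] ≤ C Σ_{i+j=k} H_α[∂^i∂̄^j f]. -/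
open Complex MeasureTheory Metric ENNReal NNReal

theorem fderiv_eq_wirt (f : ℂ → ℂ) (z h : ℂ) :
    fderiv ℝ f z h = wD f z * h + wDbar f z * (starRingEnd ℂ) h := by
  have h1 : h = h.re • (1:ℂ) + h.im • Complex.I := by
    simp [Complex.re_add_im]
  have h2 : fderiv ℝ f z h = h.re • fderiv ℝ f z 1 + h.im • fderiv ℝ f z Complex.I := by
    conv_lhs => rw [h1]
    rw [map_add, map_smul, map_smul]
  have h3 : (starRingEnd ℂ) h = h.re - h.im * Complex.I := by
    apply Complex.ext <;> simp
  have h4 : h = h.re + h.im * Complex.I := (Complex.re_add_im h).symm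
  rw [h2, h3]
  simp only [wD, wDbar, Complex.real_smul]
  conv_rhs => rw [h4]
  simp only [Complex.add_re, Complex.add_im, Complex.mul_re, Complex.mul_im, Complex.ofReal_re,
    Complex.ofReal_im, Complex.I_re, Complex.I_im]
  push_cast
  linear_combination ((h.im:ℂ) * fderiv ℝ f z Complex.I) * Complex.I_sq

theorem wD_contDiffOn {U : Set ℂ} (hU : IsOpen U) {n : ℕ} {f : ℂ → ℂ}
    (hf : ContDiffOn ℝ (n + 1 : ℕ) f U) : ContDiffOn ℝ n (wD f) U := by
  have h := (contDiffOn_succ_iff_fderiv_of_isOpen (n := (n : WithTop ℕ∞)) hU).1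
    (by exact_mod_cast hf)
  have h2 := h.2.2
  unfold wD
  exact ((h2.clm_apply contDiffOn_const).sub
    (contDiffOn_const.mul (h2.clm_apply contDiffOn_const))).div_const 2

theorem wDbar_contDiffOn {U : Set ℂ} (hU : IsOpen U) {n : ℕ} {f : ℂ → ℂ}
    (hf : ContDiffOn ℝ (n + 1 : ℕ) f U) : ContDiffOn ℝ n (wDbar f) U := by
  have h := (contDiffOn_succ_iff_fderiv_of_isOpen (n := (n : WithTop ℕ∞)) hU).1
    (by exact_mod_cast hf)
  have h2 := h.2.2
  unfold wDbar
  exact ((h2.clm_apply contDiffOn_const).add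
    (contDiffOn_const.mul (h2.clm_apply contDiffOn_const))).div_const 2

theorem wD_congr {U : Set ℂ} (hU : IsOpen U) {f g : ℂ → ℂ} (h : Set.EqOn f g U) :
    Set.EqOn (wD f) (wD g) U := by
  intro z hz
  have : f =ᶠ[nhds z] g := Filter.eventuallyEq_of_mem (hU.mem_nhds hz) h
  simp only [wD, this.fderiv_eq]

theorem wDbar_congr {U : Set ℂ} (hU : IsOpen U) {f g : ℂ → ℂ} (h : Set.EqOn f g U) :
    Set.EqOn (wDbar f) (wDbar g) U := by
  intro z hz
  have : f =ᶠ[nhds z] g := Filter.eventuallyEq_of_mem (hU.mem_nhds hz) h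
  simp only [wDbar, this.fderiv_eq]

theorem wD_iter_congr {U : Set ℂ} (hU : IsOpen U) (i : ℕ) {f g : ℂ → ℂ} (h : Set.EqOn f g U) :
    Set.EqOn (wD^[i] f) (wD^[i] g) U := by
  induction i with
  | zero => exact h
  | succ n ih =>
    rw [Function.iterate_succ_apply', Function.iterate_succ_apply']
    exact wD_congr hU ih

theorem wDbar_iter_congr {U : Set ℂ} (hU : IsOpen U) (i : ℕ) {f g : ℂ → ℂ} (h : Set.EqOn f g U) :
    Set.EqOn (wDbar^[i] f) (wDbar^[i] g) U := by
  induction i with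
  | zero => exact h
  | succ n ih =>
    rw [Function.iterate_succ_apply', Function.iterate_succ_apply']
    exact wDbar_congr hU ih

theorem wirt_comm {U : Set ℂ} (hU : IsOpen U) {f : ℂ → ℂ}
    (hf : ContDiffOn ℝ 2 f U) : Set.EqOn (wDbar (wD f)) (wD (wDbar f)) U := by
  intro z hz
  have hat : ContDiffAt ℝ 2 f z := hf.contDiffAt (hU.mem_nhds hz)
  have hsymm : IsSymmSndFDerivAt ℝ f z := hat.isSymmSndFDerivAt (by simp)
  have hd : DifferentiableAt ℝ (fderiv ℝ f) z :=
    (hat.fderiv_right (m := 1) (by norm_num)).differentiableAt (by norm_num)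
  have hv : ∀ v : ℂ, HasFDerivAt (fun y => fderiv ℝ f y v) ((fderiv ℝ (fderiv ℝ f) z).flip v) z := by
    intro v
    have := hd.hasFDerivAt.clm_apply (hasFDerivAt_const v z)
    refine this.congr_fderiv ?_
    ext <;> simp
  have e1 : HasFDerivAt (wD f) ((2:ℂ)⁻¹ • ((fderiv ℝ (fderiv ℝ f) z).flip 1
      - Complex.I • (fderiv ℝ (fderiv ℝ f) z).flip Complex.I)) z := by
    have := (((hv 1).sub ((hv Complex.I).const_mul Complex.I))).mul_const ((2:ℂ)⁻¹)
    have e : wD f = fun y => (fderiv ℝ f y 1 - Complex.I * fderiv ℝ f y Complex.I) * (2:ℂ)⁻¹ := by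
      ext y; simp only [wD, div_eq_mul_inv]
    rw [e]
    exact this
  have e2 : HasFDerivAt (wDbar f) ((2:ℂ)⁻¹ • ((fderiv ℝ (fderiv ℝ f) z).flip 1
      + Complex.I • (fderiv ℝ (fderiv ℝ f) z).flip Complex.I)) z := by
    have := (((hv 1).add ((hv Complex.I).const_mul Complex.I))).mul_const ((2:ℂ)⁻¹)
    have e : wDbar f = fun y => (fderiv ℝ f y 1 + Complex.I * fderiv ℝ f y Complex.I) * (2:ℂ)⁻¹ := by
      ext y; simp only [wDbar, div_eq_mul_inv]
    rw [e]
    exact this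
  have hs := hsymm 1 Complex.I
  show (fderiv ℝ (wD f) z 1 + Complex.I * fderiv ℝ (wD f) z Complex.I) / 2
    = (fderiv ℝ (wDbar f) z 1 - Complex.I * fderiv ℝ (wDbar f) z Complex.I) / 2
  rw [e1.fderiv, e2.fderiv]
  simp
  rw [hs]
  ring

theorem wDbar_iter_wD {U : Set ℂ} (hU : IsOpen U) (j : ℕ) : ∀ {f : ℂ → ℂ},
    ContDiffOn ℝ (j + 1 : ℕ) f U → Set.EqOn (wDbar^[j] (wD f)) (wD (wDbar^[j] f)) U := by
  induction j with
  | zero => intro f _ z _; rfl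
  | succ n ih =>
    intro f hf
    rw [Function.iterate_succ_apply, Function.iterate_succ_apply]
    have h1 : Set.EqOn (wDbar (wD f)) (wD (wDbar f)) U :=
      wirt_comm hU (hf.of_le (by norm_cast; omega))
    exact (wDbar_iter_congr hU n h1).trans (ih (wDbar_contDiffOn hU hf))

theorem wDij_wD {U : Set ℂ} (hU : IsOpen U) (i j : ℕ) {f : ℂ → ℂ}
    (hf : ContDiffOn ℝ (i + j + 1 : ℕ) f U) : Set.EqOn (wDij i j (wD f)) (wDij (i+1) j f) U := by
  unfold wDij
  rw [Function.iterate_succ_apply]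
  exact wD_iter_congr hU i (wDbar_iter_wD hU j (hf.of_le (by norm_cast; omega)))

/-- real polynomials of degree at most `k`. -/
def RPoly (k : ℕ) : Submodule ℂ (ℂ → ℂ) :=
  Submodule.span ℂ {p | ∃ i j : ℕ, i + j ≤ k ∧ p = fun h => h ^ i * ((starRingEnd ℂ) h) ^ j}

theorem RPoly_const (k : ℕ) (c : ℂ) : (fun _ => c) ∈ RPoly k := by
  have : (fun h : ℂ => h ^ 0 * ((starRingEnd ℂ) h) ^ 0) ∈ RPoly k :=
    Submodule.subset_span ⟨0, 0, by simp, rfl⟩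
  have h2 := (RPoly k).smul_mem c this
  convert h2 using 1
  ext; simp

theorem RPoly_int (k : ℕ) (P : ℂ → ℂ) (hP : P ∈ RPoly k) (a b : ℕ) (hab : a + b = 1) :
    ∃ Q ∈ RPoly (k+1), Q 0 = 0 ∧ ∀ (h : ℂ) (t : ℝ),
      HasDerivAt (fun s : ℝ => Q (s * h)) (P (t * h) * (h ^ a * ((starRingEnd ℂ) h) ^ b)) t := by
  induction hP using Submodule.span_induction with
  | mem p hp =>
    obtain ⟨i, j, hij, rfl⟩ := hp
    refine ⟨fun h => ((i + j + 1 : ℕ) : ℂ)⁻¹ * (h ^ (i+a) * ((starRingEnd ℂ) h) ^ (j+b)), ?_, ?_, ?_⟩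
    · exact (RPoly (k+1)).smul_mem _ (Submodule.subset_span ⟨i+a, j+b, by omega, rfl⟩)
    · have : i + a ≠ 0 ∨ j + b ≠ 0 := by omega
      rcases this with h | h <;> simp only [map_zero, zero_pow h, mul_zero, zero_mul]
    · intro h t
      have h1 : HasDerivAt (fun s : ℝ => ((s ^ (i+j+1) : ℝ) : ℂ))
          (((i+j+1 : ℕ) * t ^ (i+j) : ℝ) : ℂ) t := by
        have := (hasDerivAt_pow (i+j+1) t).ofReal_comp
        simpa using this
      have h2 := h1.mul_const (((i + j + 1 : ℕ) : ℂ)⁻¹ * (h ^ (i+a) * ((starRingEnd ℂ) h) ^ (j+b)))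
      have hne : ((i + j + 1 : ℕ) : ℂ) ≠ 0 := by exact_mod_cast Nat.succ_ne_zero (i+j)
      have efun : (fun s : ℝ => ((i + j + 1 : ℕ) : ℂ)⁻¹ * (((s:ℂ) * h) ^ (i+a) *
          ((starRingEnd ℂ) ((s:ℂ) * h)) ^ (j+b))) = fun s : ℝ => ((s ^ (i+j+1) : ℝ) : ℂ) *
          (((i + j + 1 : ℕ) : ℂ)⁻¹ * (h ^ (i+a) * ((starRingEnd ℂ) h) ^ (j+b))) := by
        ext s
        have : s ^ (i + j + 1) = s ^ (i + a) * s ^ (j + b) := by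
          rw [← pow_add]; congr 1; omega
        simp only [map_mul, Complex.conj_ofReal, mul_pow]
        rw [this]; push_cast; ring
      rw [efun]
      refine h2.congr_deriv ?_
      simp only [map_mul, Complex.conj_ofReal, mul_pow]
      rw [pow_add h, pow_add ((starRingEnd ℂ) h)]
      push_cast at hne ⊢
      rw [pow_add (t:ℂ)]
      field_simp
  | zero =>
    refine ⟨0, Submodule.zero_mem _, rfl, ?_⟩
    intro h t
    simpa using hasDerivAt_const t (0:ℂ)
  | add p q _ _ hp hq =>
    obtain ⟨P, hP, hP0, hPd⟩ := hp
    obtain ⟨Q, hQ, hQ0, hQd⟩ := hq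
    refine ⟨P + Q, Submodule.add_mem _ hP hQ, by simp [hP0, hQ0], ?_⟩
    intro h t
    refine ((hPd h t).add (hQd h t)).congr_deriv ?_
    simp only [Pi.add_apply, Pi.smul_apply, smul_eq_mul]; ring
  | smul c p _ hp =>
    obtain ⟨P, hP, hP0, hPd⟩ := hp
    refine ⟨c • P, Submodule.smul_mem _ _ hP, by simp [hP0], ?_⟩
    intro h t
    refine ((hPd h t).const_mul c).congr_deriv ?_
    simp only [Pi.add_apply, Pi.smul_apply, smul_eq_mul]; ring

theorem taylor_approx {α R : ℝ} (hα : 0 < α) {U : Set ℂ} (hU : IsOpen U)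
    (hRU : closedBall (0:ℂ) R ⊆ U) {M : ℝ} (hM : 0 ≤ M) {w : ℂ} (hw : w ∈ closedBall (0:ℂ) R)
    (k : ℕ) : ∀ f : ℂ → ℂ, ContDiffOn ℝ k f U →
    (∀ i j, i + j = k → ∀ x ∈ closedBall (0:ℂ) R, ∀ y ∈ closedBall (0:ℂ) R,
      ‖wDij i j f x - wDij i j f y‖ ≤ M * ‖x - y‖ ^ α) →
    ∃ P ∈ RPoly k, ∀ x ∈ closedBall (0:ℂ) R,
      ‖f x - P (x - w)‖ ≤ 2 ^ k * M * (‖x - w‖ ^ k * ‖x - w‖ ^ α) := by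
  induction k with
  | zero =>
    intro f _ hH
    refine ⟨fun _ => f w, RPoly_const 0 _, ?_⟩
    intro x hx
    have := hH 0 0 rfl x hx w hw
    simpa [wDij] using this
  | succ n ih =>
    intro f hf hH
    obtain ⟨P1, hP1, hb1⟩ := ih (wD f) (wD_contDiffOn hU hf) (by
      intro i j hij x hx y hy
      have e := wDij_wD hU i j (f := f) (by rw [hij]; exact hf)
      rw [e (hRU hx), e (hRU hy)]
      exact hH (i+1) j (by omega) x hx y hy)
    obtain ⟨P2, hP2, hb2⟩ := ih (wDbar f) (wDbar_contDiffOn hU hf) (by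
      intro i j hij x hx y hy
      exact hH i (j+1) (by omega) x hx y hy)
    obtain ⟨Q1, hQ1, hQ10, hQ1d⟩ := RPoly_int n P1 hP1 1 0 rfl
    obtain ⟨Q2, hQ2, hQ20, hQ2d⟩ := RPoly_int n P2 hP2 0 1 rfl
    refine ⟨(fun _ => f w) + Q1 + Q2,
      Submodule.add_mem _ (Submodule.add_mem _ (RPoly_const _ _) hQ1) hQ2, ?_⟩
    intro x hx
    set h := x - w with hh
    have hseg : ∀ t ∈ Set.Icc (0:ℝ) 1, w + t * h ∈ closedBall (0:ℂ) R := by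
      intro t ht
      have := (convex_closedBall (0:ℂ) R).add_smul_sub_mem hw hx ht
      simpa using this
    have key := norm_image_sub_le_of_norm_deriv_le_segment_01'
      (f := fun t : ℝ => f (w + t * h) - (Q1 (t * h) + Q2 (t * h)))
      (f' := fun t : ℝ => (wD f (w + t * h) - P1 (t * h)) * h
        + (wDbar f (w + t*h) - P2 (t*h)) * (starRingEnd ℂ) h)
      (C := 2 ^ (n+1) * M * (‖h‖ ^ (n+1) * ‖h‖ ^ α)) ?_ ?_
    · simp only [Complex.ofReal_one, one_mul, Complex.ofReal_zero, zero_mul, add_zero, hQ10, hQ20,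
        sub_zero] at key
      have e : w + h = x := by rw [hh]; ring
      rw [e] at key
      have e2 : f x - ((fun _ => f w : ℂ → ℂ) + Q1 + Q2) h = f x - (Q1 h + Q2 h) - f w := by
        simp only [Pi.add_apply]
        ring
      rw [e2]
      exact key
    · intro t ht
      have hfd : HasFDerivAt f (fderiv ℝ f (w + t * h)) (w + t * h) :=
        ((hf.contDiffAt (hU.mem_nhds (hRU (hseg t ht)))).differentiableAt
          (by norm_cast)).hasFDerivAt
      have hl : HasDerivAt (fun s : ℝ => w + (s:ℂ) * h) h t := by
        have := ((Complex.ofRealCLM.hasDerivAt (x := t)).mul_const h).const_add w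
        simpa using this
      have hc := hfd.comp_hasDerivAt t hl
      have := hc.sub ((hQ1d h t).add (hQ2d h t))
      refine HasDerivAt.hasDerivWithinAt ?_
      refine this.congr_deriv ?_
      rw [fderiv_eq_wirt]
      ring
    · intro t ht
      have ht' : t ∈ Set.Icc (0:ℝ) 1 := ⟨ht.1, ht.2.le⟩
      have hb1' := hb1 _ (hseg t ht')
      have hb2' := hb2 _ (hseg t ht')
      simp only [add_sub_cancel_left] at hb1' hb2'
      have hn : ‖(t:ℂ) * h‖ ≤ ‖h‖ := by
        rw [norm_mul, Complex.norm_real, Real.norm_of_nonneg ht.1]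
        exact mul_le_of_le_one_left (norm_nonneg _) ht.2.le
      have hmono : 2 ^ n * M * (‖(t:ℂ) * h‖ ^ n * ‖(t:ℂ) * h‖ ^ α) ≤
          2 ^ n * M * (‖h‖ ^ n * ‖h‖ ^ α) := by
        gcongr
      calc _ ≤ ‖(wD f (w + t * h) - P1 (t * h))‖ * ‖h‖
            + ‖(wDbar f (w + t*h) - P2 (t*h))‖ * ‖h‖ := by
            refine (norm_add_le _ _).trans ?_
            rw [norm_mul, norm_mul, RCLike.norm_conj]
        _ ≤ 2 ^ n * M * (‖h‖ ^ n * ‖h‖ ^ α) * ‖h‖ + 2 ^ n * M * (‖h‖ ^ n * ‖h‖ ^ α) * ‖h‖ := by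
            gcongr
            · exact hb1'.trans hmono
            · exact hb2'.trans hmono
        _ = _ := by ring

theorem kernel_hasDerivAt {R : ℝ} {g : ℝ → ℂ} (hg : Continuous g) (n : ℕ) {z : ℂ}
    (hz : z ∈ ball (0:ℂ) R) :
    HasDerivAt (fun y : ℂ => ∫ θ in (0:ℝ)..(2 * Real.pi),
        g θ / (R * Complex.exp (Complex.I * θ) - y) ^ (n+1))
      (∫ θ in (0:ℝ)..(2 * Real.pi),
        ((n + 1 : ℕ) : ℂ) * (g θ / (R * Complex.exp (Complex.I * θ) - z) ^ (n+2))) z := by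
  have hzR : ‖z‖ < R := by simpa using hz
  have hR : 0 < R := (norm_nonneg z).trans_lt hzR
  set ε := (R - ‖z‖) / 2 with hε
  have hεpos : 0 < ε := by rw [hε]; linarith
  have hlow : ∀ y ∈ ball z ε, ∀ θ : ℝ, ε ≤ ‖(R * Complex.exp (Complex.I * θ) - y : ℂ)‖ := by
    intro y hy θ
    have h1 : ‖(R * Complex.exp (Complex.I * θ) : ℂ)‖ = R := by
      rw [norm_mul, mul_comm Complex.I, Complex.norm_exp_ofReal_mul_I, Complex.norm_real,
        Real.norm_of_nonneg hR.le, mul_one]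
    have h2 : ‖y‖ ≤ ‖z‖ + ε := by
      have : ‖y - z‖ < ε := by simpa [dist_eq_norm] using hy
      have := norm_le_norm_add_norm_sub' y z
      linarith
    have := norm_sub_norm_le (R * Complex.exp (Complex.I * θ) : ℂ) y
    rw [h1] at this
    linarith
  have hne : ∀ y ∈ ball z ε, ∀ θ : ℝ, (R * Complex.exp (Complex.I * θ) - y : ℂ) ≠ 0 := by
    intro y hy θ h0
    have := hlow y hy θ
    rw [h0, norm_zero] at this
    linarith
  have hcont : ∀ y ∈ ball z ε, ∀ m : ℕ,
      Continuous (fun θ : ℝ => g θ / (R * Complex.exp (Complex.I * θ) - y) ^ m) := by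
    intro y hy m
    exact hg.div (by fun_prop) (fun θ => pow_ne_zero _ (hne y hy θ))
  have hzb : z ∈ ball z ε := mem_ball_self hεpos
  refine (intervalIntegral.hasDerivAt_integral_of_dominated_loc_of_deriv_le
    (F := fun y θ => g θ / (R * Complex.exp (Complex.I * θ) - y) ^ (n+1))
    (F' := fun y θ => ((n + 1 : ℕ) : ℂ) * (g θ / (R * Complex.exp (Complex.I * θ) - y) ^ (n+2)))
    (bound := fun θ => (n + 1 : ℕ) * (‖g θ‖ / ε ^ (n+2)))
    (ball_mem_nhds z hεpos) ?_ ?_ ?_ ?_ ?_ ?_).2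
  · filter_upwards [ball_mem_nhds z hεpos] with y hy
    exact (hcont y hy (n+1)).aestronglyMeasurable
  · exact (hcont z hzb (n+1)).intervalIntegrable _ _
  · exact (continuous_const.mul (hcont z hzb (n+2))).aestronglyMeasurable
  · refine Filter.Eventually.of_forall ?_
    intro θ _ y hy
    rw [norm_mul, norm_div, norm_pow, Complex.norm_natCast]
    have := hlow y hy θ
    gcongr
  · exact Continuous.intervalIntegrable (by fun_prop) _ _
  · refine Filter.Eventually.of_forall ?_
    intro θ _ y hy
    have hn := hne y hy θ
    have h1 : HasDerivAt (fun y : ℂ => (R * Complex.exp (Complex.I * θ) - y)) (-1) y := by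
      simpa using (hasDerivAt_id y).const_sub (R * Complex.exp (Complex.I * θ))
    have h2 := (hasDerivAt_const y (g θ)).div (h1.pow (n+1)) (pow_ne_zero _ hn)
    refine h2.congr_deriv ?_
    try simp only [Pi.pow_apply]
    field_simp
    simp
    ring

/-- kernel integral -/
noncomputable def Jn (R : ℝ) (f : ℂ → ℂ) (n : ℕ) (z : ℂ) : ℂ :=
  ∫ θ in (0:ℝ)..(2 * Real.pi), (f (R * Complex.exp (Complex.I * θ)) *
    (-Complex.I * R * Complex.exp (-Complex.I * θ))) / (R * Complex.exp (Complex.I * θ) - z) ^ (n+1)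

theorem circ_norm {R : ℝ} (hR : 0 < R) (θ : ℝ) : ‖(R * Complex.exp (Complex.I * θ) : ℂ)‖ = R := by
  rw [norm_mul, mul_comm Complex.I, Complex.norm_exp_ofReal_mul_I, Complex.norm_real,
    Real.norm_of_nonneg hR.le, mul_one]

theorem cont_circ {R : ℝ} (hR : 0 < R) {f : ℂ → ℂ} (hf : ContinuousOn f (closedBall 0 R)) :
    Continuous (fun θ : ℝ => f (R * Complex.exp (Complex.I * θ))) := by
  refine hf.comp_continuous (by fun_prop) ?_
  intro θ
  simp only [mem_closedBall, dist_zero_right]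
  exact (circ_norm hR θ).le

theorem Jn_hasDerivAt {R : ℝ} {f : ℂ → ℂ} (hf : ContinuousOn f (closedBall 0 R)) (n : ℕ) {z : ℂ}
    (hz : z ∈ ball (0:ℂ) R) : HasDerivAt (Jn R f n) ((n + 1 : ℕ) * Jn R f (n+1) z) z := by
  have hR : 0 < R := (dist_nonneg).trans_lt (mem_ball.1 hz)
  have := kernel_hasDerivAt (R := R) ((cont_circ hR hf).mul
    (show Continuous (fun θ : ℝ => -Complex.I * R * Complex.exp (-Complex.I * θ)) by fun_prop)) n hz
  rw [intervalIntegral.integral_const_mul] at this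
  exact this

theorem Sb_iter {R : ℝ} {f : ℂ → ℂ} (hf : ContinuousOn f (closedBall 0 R)) (n : ℕ) :
    ∀ z ∈ ball (0:ℂ) R, iteratedDeriv n (Sb R f) z =
      (2 * Real.pi * Complex.I)⁻¹ * (Nat.factorial n * Jn R f n z) := by
  induction n with
  | zero =>
    intro z _
    simp only [iteratedDeriv_zero, Sb, Jn, Nat.factorial_zero, Nat.cast_one, one_mul, zero_add,
      pow_one]
    congr 2
    ext θ
    ring
  | succ n ih =>
    intro z hz
    rw [iteratedDeriv_succ]
    have he : iteratedDeriv n (Sb R f) =ᶠ[nhds z] fun z => 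
      (2 * Real.pi * Complex.I)⁻¹ * (Nat.factorial n * Jn R f n z) :=
      Filter.eventuallyEq_of_mem (isOpen_ball.mem_nhds hz) ih
    rw [he.deriv_eq, (((Jn_hasDerivAt hf n hz).const_mul _).const_mul _).deriv,
      Nat.factorial_succ]
    push_cast
    ring

theorem Sb_iter_hasDerivAt {R : ℝ} {f : ℂ → ℂ} (hf : ContinuousOn f (closedBall 0 R)) (n : ℕ)
    {z : ℂ} (hz : z ∈ ball (0:ℂ) R) : HasDerivAt (iteratedDeriv n (Sb R f))
      ((2 * Real.pi * Complex.I)⁻¹ * (Nat.factorial (n+1) * Jn R f (n+1) z)) z := by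
  have he : iteratedDeriv n (Sb R f) =ᶠ[nhds z] fun z => 
      (2 * Real.pi * Complex.I)⁻¹ * (Nat.factorial n * Jn R f n z) :=
      Filter.eventuallyEq_of_mem (isOpen_ball.mem_nhds hz) (Sb_iter hf n)
  have := (((Jn_hasDerivAt hf n hz).const_mul (Nat.factorial n : ℂ)).const_mul
    (2 * Real.pi * Complex.I)⁻¹).congr_of_eventuallyEq he
  refine this.congr_deriv ?_
  rw [Nat.factorial_succ]
  push_cast
  ring

theorem conj_circ (R θ : ℝ) : (starRingEnd ℂ) (R * Complex.exp (Complex.I * θ)) =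
    R * Complex.exp (-Complex.I * θ) := by
  rw [map_mul, Complex.conj_ofReal, ← Complex.exp_conj]
  simp

/-- Vanishing of the kernel integral on monomials of low degree. -/
theorem Jn_mono {R : ℝ} (k i j : ℕ) (hij : i + j ≤ k) (w : ℂ) {z : ℂ} (hz : z ∈ ball (0:ℂ) R) :
    Jn R (fun ζ => (ζ - w) ^ i * ((starRingEnd ℂ) (ζ - w)) ^ j) (k+1) z = 0 := by
  have hR : 0 < R := (dist_nonneg).trans_lt (mem_ball.1 hz)
  have hzR : ‖z‖ < R := by simpa using hz
  have hRc : (R:ℂ) ≠ 0 := by exact_mod_cast hR.ne'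
  set G : ℂ → ℂ := fun u => (R^2 - u * w) ^ i * (u - (starRingEnd ℂ) w) ^ j * u ^ (k + 2 - i) /
    (R^2 - u * z) ^ (k+2) with hG
  have hden : ∀ u ∈ closedBall (0:ℂ) R, ((R:ℂ)^2 - u * z) ≠ 0 := by
    intro u hu h0
    have hu' : ‖u‖ ≤ R := by simpa using hu
    have h1 : (R:ℂ)^2 = u * z := sub_eq_zero.1 h0
    have h2 := congrArg norm h1
    rw [norm_pow, norm_mul, Complex.norm_real, Real.norm_of_nonneg hR.le] at h2
    have : ‖u‖ * ‖z‖ ≤ R * ‖z‖ := by gcongr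
    nlinarith
  have hGd : ∀ u ∈ closedBall (0:ℂ) R, DifferentiableAt ℂ G u := by
    intro u hu
    exact DifferentiableAt.div (by fun_prop) (by fun_prop) (pow_ne_zero _ (hden u hu))
  have hzero : (∮ u in C(0, R), G u) = 0 :=
    circleIntegral_eq_zero_of_differentiable_on_off_countable hR.le Set.countable_empty
      (fun u hu => (hGd u hu).continuousAt.continuousWithinAt)
      (fun u hu => hGd u (ball_subset_closedBall hu.1))
  set q : ℝ → ℂ := fun θ => deriv (circleMap 0 R) θ • G (circleMap 0 R θ) with hq
  have hqper : Function.Periodic q (2 * Real.pi) := by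
    intro θ
    simp only [hq, deriv_circleMap, periodic_circleMap 0 R θ]
  have hq0 : ∫ θ in (0:ℝ)..(2 * Real.pi), q θ = 0 := hzero
  have hneg : ∫ θ in (0:ℝ)..(2 * Real.pi), q (-θ) = 0 := by
    rw [intervalIntegral.integral_comp_neg, neg_zero]
    have := hqper.intervalIntegral_add_eq (-(2*Real.pi)) 0
    rw [zero_add, neg_add_cancel] at this
    rw [this, hq0]
  have hpt : ∀ θ : ℝ, (((R * Complex.exp (Complex.I * θ) - w) ^ i *
      ((starRingEnd ℂ) (R * Complex.exp (Complex.I * θ) - w)) ^ j) *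
    (-Complex.I * R * Complex.exp (-Complex.I * θ))) / (R * Complex.exp (Complex.I * θ) - z) ^ (k+1+1)
      = - q (-θ) := by
    intro θ
    simp only [hq, hG, deriv_circleMap, smul_eq_mul]
    rw [map_sub, conj_circ]
    have hcm : circleMap 0 R (-θ) = R * Complex.exp (-Complex.I * θ) := by
      simp only [circleMap, zero_add]
      congr 2
      push_cast; ring
    rw [hcm]
    set u := (R * Complex.exp (-Complex.I * θ) : ℂ) with hu
    have huR : u * (R * Complex.exp (Complex.I * θ)) = R ^ 2 := by
      have : Complex.exp (-Complex.I * θ) * Complex.exp (Complex.I * θ) = 1 := by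
        rw [← Complex.exp_add]; simp
      rw [hu]
      linear_combination R^2 * this
    have hune : u ≠ 0 := mul_ne_zero hRc (Complex.exp_ne_zero _)
    have humem : u ∈ closedBall (0:ℂ) R := by
      simp only [mem_closedBall, dist_zero_right, ← conj_circ, RCLike.norm_conj, hu]
      exact (circ_norm hR θ).le
    have hζ : (R * Complex.exp (Complex.I * θ) : ℂ) = R^2 / u := by
      rw [eq_div_iff hune, ← huR]; ring
    rw [hζ]
    have e1 : (R:ℂ)^2 / u - w = (R^2 - u * w) / u := by field_simp
    have e2 : (R:ℂ)^2 / u - z = (R^2 - u * z) / u := by field_simp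
    have hd := hden u humem
    have e3 : (-Complex.I * R * Complex.exp (-Complex.I * θ)) = -(u * Complex.I) := by
      rw [hu]; ring
    rw [e1, e2, e3, div_pow, div_pow]
    have e4 : u ^ (k+1+1) = u ^ (k+2-i) * u ^ i := by rw [← pow_add]; congr 1; omega
    rw [e4]
    field_simp
  unfold Jn
  simp only [hpt]
  rw [intervalIntegral.integral_neg, hneg, neg_zero]

theorem RPoly_continuous {k : ℕ} {P : ℂ → ℂ} (hP : P ∈ RPoly k) : Continuous P := by
  induction hP using Submodule.span_induction with
  | mem p hp =>
    obtain ⟨i, j, _, rfl⟩ := hp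
    fun_prop
  | zero => exact continuous_const
  | add p q _ _ hp hq => exact hp.add hq
  | smul c p _ hp => exact continuous_const.mul hp

theorem Jn_integrable {R : ℝ} {f : ℂ → ℂ} (hf : ContinuousOn f (closedBall 0 R)) (n : ℕ) {z : ℂ}
    (hz : z ∈ ball (0:ℂ) R) : Continuous (fun θ : ℝ => (f (R * Complex.exp (Complex.I * θ)) *
    (-Complex.I * R * Complex.exp (-Complex.I * θ))) /
      (R * Complex.exp (Complex.I * θ) - z) ^ (n+1)) := by
  have hR : 0 < R := (dist_nonneg).trans_lt (mem_ball.1 hz)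
  have hzR : ‖z‖ < R := by simpa using hz
  refine ((cont_circ hR hf).mul (by fun_prop)).div (by fun_prop) ?_
  intro θ
  refine pow_ne_zero _ ?_
  intro h0
  have := circ_norm hR θ
  rw [sub_eq_zero.1 h0] at this
  linarith

theorem Jn_add {R : ℝ} {f g : ℂ → ℂ} (hf : ContinuousOn f (closedBall 0 R))
    (hg : ContinuousOn g (closedBall 0 R)) (n : ℕ) {z : ℂ}
    (hz : z ∈ ball (0:ℂ) R) : Jn R (fun x => f x + g x) n z = Jn R f n z + Jn R g n z := by
  unfold Jn
  rw [← intervalIntegral.integral_add ((Jn_integrable hf n hz).intervalIntegrable _ _)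
    ((Jn_integrable hg n hz).intervalIntegrable _ _)]
  congr 1
  ext θ
  ring

theorem Jn_smul {R : ℝ} {f : ℂ → ℂ} (c : ℂ) (n : ℕ) {z : ℂ} :
    Jn R (fun x => c * f x) n z = c * Jn R f n z := by
  unfold Jn
  rw [← intervalIntegral.integral_const_mul]
  congr 1
  ext θ
  ring

theorem Jn_poly {R : ℝ} {k : ℕ} {P : ℂ → ℂ} (hP : P ∈ RPoly k) (w : ℂ) {z : ℂ}
    (hz : z ∈ ball (0:ℂ) R) : Jn R (fun x => P (x - w)) (k+1) z = 0 := by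
  induction hP using Submodule.span_induction with
  | mem p hp =>
    obtain ⟨i, j, hij, rfl⟩ := hp
    exact Jn_mono k i j hij w hz
  | zero => simp [Jn]
  | add p q hp hq ihp ihq =>
    have h1 := (RPoly_continuous hp).comp (show Continuous (fun x : ℂ => x - w) by fun_prop)
    have h2 := (RPoly_continuous hq).comp (show Continuous (fun x : ℂ => x - w) by fun_prop)
    have := Jn_add (R := R) h1.continuousOn h2.continuousOn (k+1) hz
    simp only [Function.comp_apply] at this
    simp only [Pi.add_apply]
    rw [this]
    exact (congrArg₂ (· + ·) ihp ihq).trans (add_zero 0)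
  | smul c p _ hp =>
    simp only [Pi.smul_apply, smul_eq_mul]
    rw [Jn_smul, hp, mul_zero]

theorem hardy_littlewood {α R A : ℝ} (h0 : 0 < α) (h1 : α < 1) (hR : 0 < R) (hA : 0 ≤ A)
    {G G' : ℂ → ℂ} (hG : ∀ z ∈ ball (0:ℂ) R, HasDerivAt G (G' z) z)
    (hb : ∀ z ∈ ball (0:ℂ) R, ‖G' z‖ ≤ A * (R - ‖z‖) ^ (α - 1)) :
    ∀ z ∈ ball (0:ℂ) R, ∀ z' ∈ ball (0:ℂ) R,
      ‖G z - G z'‖ ≤ A * (2 / α + 2) * ‖z - z'‖ ^ α := by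
  have rad : ∀ z ∈ ball (0:ℂ) R, ∀ s ∈ Set.Icc (0:ℝ) 1,
      ‖G ((1 - s : ℝ) * z) - G z‖ ≤ A / α * (s * R) ^ α := by
    intro z hz s hs
    have hzR : ‖z‖ < R := by simpa using hz
    have hn : ∀ x ∈ Set.Icc (0:ℝ) 1, ‖((1 - x : ℝ) * z : ℂ)‖ = (1-x) * ‖z‖ := by
      intro x hx
      rw [norm_mul, Complex.norm_real, Real.norm_of_nonneg (by linarith [hx.2])]
    have hmem : ∀ x ∈ Set.Icc (0:ℝ) 1, ((1 - x : ℝ) * z : ℂ) ∈ ball (0:ℂ) R := by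
      intro x hx
      rw [mem_ball_zero_iff, hn x hx]
      nlinarith [hx.1, hx.2, norm_nonneg z]
    have hder : ∀ x ∈ Set.Icc (0:ℝ) 1, HasDerivAt (fun x : ℝ => G ((1 - x : ℝ) * z) - G z)
        (G' ((1 - x : ℝ) * z) * (-z)) x := by
      intro x hx
      have hl : HasDerivAt (fun x : ℝ => ((1 - x : ℝ) * z : ℂ)) (-z) x := by
        have := (((hasDerivAt_id x).const_sub 1).ofReal_comp).mul_const z
        simpa using this
      exact ((hG _ (hmem x hx)).comp x hl).sub_const _
    have hpos : ∀ x ∈ Set.Icc (0:ℝ) 1, 0 < R - ‖z‖ + x * ‖z‖ := by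
      intro x hx
      have := mul_nonneg hx.1 (norm_nonneg z)
      linarith
    have hBd : ∀ x ∈ Set.Icc (0:ℝ) 1, HasDerivAt
        (fun x : ℝ => A / α * ((R - ‖z‖ + x * ‖z‖) ^ α - (R - ‖z‖) ^ α))
        (A * (R - ‖z‖ + x * ‖z‖) ^ (α - 1) * ‖z‖) x := by
      intro x hx
      have hl : HasDerivAt (fun x : ℝ => R - ‖z‖ + x * ‖z‖) ‖z‖ x := by
        simpa using ((hasDerivAt_id x).mul_const ‖z‖).const_add (R - ‖z‖)
      have := ((hl.rpow_const (p := α) (Or.inl (hpos x hx).ne')).sub_const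
        ((R - ‖z‖) ^ α)).const_mul (A / α)
      refine this.congr_deriv ?_
      field_simp
    have := image_norm_le_of_norm_deriv_right_le_deriv_boundary' (a := 0) (b := 1)
      (f := fun x : ℝ => G ((1 - x : ℝ) * z) - G z)
      (f' := fun x : ℝ => G' ((1 - x : ℝ) * z) * (-z))
      (B := fun x : ℝ => A / α * ((R - ‖z‖ + x * ‖z‖) ^ α - (R - ‖z‖) ^ α))
      (B' := fun x : ℝ => A * (R - ‖z‖ + x * ‖z‖) ^ (α - 1) * ‖z‖)
      (fun x hx => (hder x hx).continuousAt.continuousWithinAt)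
      (fun x hx => (hder x ⟨hx.1, hx.2.le⟩).hasDerivWithinAt)
      (by simp)
      (fun x hx => (hBd x hx).continuousAt.continuousWithinAt)
      (fun x hx => (hBd x ⟨hx.1, hx.2.le⟩).hasDerivWithinAt)
      (by
        intro x hx
        have hx' : x ∈ Set.Icc (0:ℝ) 1 := ⟨hx.1, hx.2.le⟩
        rw [norm_mul, norm_neg]
        have := hb _ (hmem x hx')
        rw [hn x hx'] at this
        have e : R - (1-x) * ‖z‖ = R - ‖z‖ + x * ‖z‖ := by ring
        rw [e] at this
        gcongr) hs
    refine this.trans ?_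
    have hsub := Real.rpow_add_le_add_rpow (p := α) (show 0 ≤ R - ‖z‖ by linarith)
      (mul_nonneg hs.1 (norm_nonneg z)) h0.le h1.le
    have h3 : (s * ‖z‖) ^ α ≤ (s * R) ^ α := by
      have := hs.1
      gcongr
    have : (R - ‖z‖ + s * ‖z‖) ^ α - (R - ‖z‖) ^ α ≤ (s * R) ^ α := by linarith
    gcongr
  intro z hz z' hz'
  by_cases hzz : z = z'
  · subst hzz
    simp
    positivity
  have hzR : ‖z‖ < R := by simpa using hz
  have hzR' : ‖z'‖ < R := by simpa using hz'
  set d := ‖z - z'‖ with hd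
  have hdpos : 0 < d := norm_pos_iff.2 (sub_ne_zero.2 hzz)
  have hd2 : d ≤ 2 * R := (norm_sub_le z z').trans (by linarith)
  set s := d / (2 * R) with hs
  have hspos : 0 < s := by positivity
  have hs1 : s ≤ 1 := by rw [hs, div_le_one (by positivity)]; exact hd2
  have hsm : s ∈ Set.Icc (0:ℝ) 1 := ⟨hspos.le, hs1⟩
  have hsR : s * R = d / 2 := by rw [hs]; field_simp
  have r1 := rad z hz s hsm
  have r2 := rad z' hz' s hsm
  rw [hsR] at r1 r2
  have hsc : ∀ y ∈ ball (0:ℂ) R, ((1 - s : ℝ) * y : ℂ) ∈ closedBall (0:ℂ) (R - d / 2) := by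
    intro y hy
    have hyR : ‖y‖ < R := by simpa using hy
    rw [mem_closedBall_zero_iff, norm_mul, Complex.norm_real,
      Real.norm_of_nonneg (by linarith), ← hsR]
    nlinarith
  have mid : ‖G ((1 - s : ℝ) * z) - G ((1 - s : ℝ) * z')‖ ≤
      A * (d / 2) ^ (α - 1) * ‖((1 - s : ℝ) * z : ℂ) - (1 - s : ℝ) * z'‖ := by
    refine (convex_closedBall (0:ℂ) (R - d/2)).norm_image_sub_le_of_norm_hasDerivWithin_le
      (f' := G') ?_ ?_ (hsc z' hz') (hsc z hz)
    · intro x hx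
      refine (hG x ?_).hasDerivWithinAt
      rw [mem_closedBall_zero_iff] at hx
      rw [mem_ball_zero_iff]
      linarith
    · intro x hx
      rw [mem_closedBall_zero_iff] at hx
      refine (hb x (by rw [mem_ball_zero_iff]; linarith)).trans ?_
      have : (R - ‖x‖) ^ (α - 1) ≤ (d / 2) ^ (α - 1) :=
        Real.rpow_le_rpow_of_nonpos (by positivity) (by linarith) (by linarith)
      gcongr
  have hlen : ‖((1 - s : ℝ) * z : ℂ) - (1 - s : ℝ) * z'‖ ≤ d := by
    rw [← mul_sub, norm_mul, Complex.norm_real, Real.norm_of_nonneg (by linarith)]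
    exact mul_le_of_le_one_left (norm_nonneg _) (by linarith)
  have hpow : (d / 2) ^ (α - 1) * d = 2 * (d / 2) ^ α := by
    rw [Real.rpow_sub_one (by positivity)]
    field_simp
  have hmid : ‖G ((1 - s : ℝ) * z) - G ((1 - s : ℝ) * z')‖ ≤ A * 2 * (d / 2) ^ α := by
    refine mid.trans ?_
    calc _ ≤ A * (d / 2) ^ (α - 1) * d := by gcongr
      _ = _ := by rw [mul_assoc, hpow]; ring
  have hdd : (d / 2) ^ α ≤ d ^ α := by
    gcongr
    linarith
  calc ‖G z - G z'‖ = ‖-(G ((1 - s : ℝ) * z) - G z) + (G ((1 - s : ℝ) * z) - G ((1 - s : ℝ) * z'))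
        + (G ((1 - s : ℝ) * z') - G z')‖ := by congr 1; ring
    _ ≤ ‖G ((1 - s : ℝ) * z) - G z‖ + ‖G ((1 - s : ℝ) * z) - G ((1 - s : ℝ) * z')‖
        + ‖G ((1 - s : ℝ) * z') - G z'‖ := by
        refine (norm_add_le _ _).trans ?_
        gcongr
        refine (norm_add_le _ _).trans ?_
        rw [norm_neg]
    _ ≤ A / α * (d / 2) ^ α + A * 2 * (d / 2) ^ α + A / α * (d / 2) ^ α := by gcongr
    _ = A * (2 / α + 2) * (d / 2) ^ α := by ring
    _ ≤ _ := by gcongr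

theorem circ_dist (R t φ : ℝ) (hR : 0 < R) (ht : |t| ≤ Real.pi) :
    2 * R / Real.pi * |t| ≤
      ‖(R * Complex.exp (Complex.I * (t + φ : ℝ)) - R * Complex.exp (Complex.I * φ) : ℂ)‖ := by
  have e : (R * Complex.exp (Complex.I * (t + φ : ℝ)) - R * Complex.exp (Complex.I * φ) : ℂ)
      = R * Complex.exp (Complex.I * φ) * (Complex.exp (Complex.I * t) - 1) := by
    push_cast
    rw [mul_add, Complex.exp_add]
    ring
  rw [e, norm_mul, circ_norm hR, Complex.norm_exp_I_mul_ofReal_sub_one]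
  have h2 := Real.mul_abs_le_abs_sin (x := t / 2) (by rw [abs_div, abs_two]; linarith)
  rw [norm_mul, Real.norm_eq_abs, Real.norm_eq_abs, abs_two]
  rw [abs_div, abs_two] at h2
  calc 2 * R / Real.pi * |t| = R * (2 * (2 / Real.pi * (|t| / 2))) := by ring
    _ ≤ _ := by gcongr

/-- The kernel estimate. -/
theorem kernel_est {α R : ℝ} (h0 : 0 < α) (h1 : α < 1) {z : ℂ} (hz : z ∈ ball (0:ℂ) R) :
    R * ∫ θ in (0:ℝ)..(2 * Real.pi), ‖(R * Complex.exp (Complex.I * θ) - z : ℂ)‖ ^ (α - 2) ≤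
      (8 * Real.pi / (1 - α)) * (R - ‖z‖) ^ (α - 1) := by
  have hR : 0 < R := (dist_nonneg).trans_lt (mem_ball.1 hz)
  have hzR : ‖z‖ < R := by simpa using hz
  set φ := Complex.arg z with hφ
  set w : ℂ := R * Complex.exp (Complex.I * φ) with hw
  set δ := R - ‖z‖ with hδ
  have hδpos : 0 < δ := by rw [hδ]; linarith
  have hpi := Real.pi_pos
  have hwz : ‖w - z‖ = δ := by
    have : w - z = δ * Complex.exp (Complex.I * φ) := by
      have := Complex.norm_mul_exp_arg_mul_I z
      rw [hw, hδ, mul_comm Complex.I]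
      push_cast
      conv_lhs => rw [← this]
      ring
    rw [this, circ_norm hδpos]
  have hlow1 : ∀ θ : ℝ, δ ≤ ‖(R * Complex.exp (Complex.I * θ) - z : ℂ)‖ := by
    intro θ
    have := norm_sub_norm_le (R * Complex.exp (Complex.I * θ) : ℂ) z
    rwa [circ_norm hR] at this
  set F : ℝ → ℝ := fun θ => ‖(R * Complex.exp (Complex.I * θ) - z : ℂ)‖ ^ (α - 2) with hF
  have hFc : Continuous F := by
    refine Continuous.rpow_const (by fun_prop) ?_
    intro θ
    left
    have := hlow1 θ
    linarith
  have hFper : Function.Periodic F (2 * Real.pi) := by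
    intro θ
    simp only [hF]
    congr 3
    push_cast
    rw [mul_add, Complex.exp_add, mul_comm Complex.I (2 * (Real.pi:ℂ)), Complex.exp_two_pi_mul_I,
      mul_one]
  have hshift : ∫ θ in (0:ℝ)..(2 * Real.pi), F θ = ∫ t in (-Real.pi)..Real.pi, F (t + φ) := by
    rw [intervalIntegral.integral_comp_add_right]
    have := hFper.intervalIntegral_add_eq 0 (-Real.pi + φ)
    rw [zero_add] at this
    rw [this]
    congr 1
    ring
  set c := R / Real.pi with hc
  have hcpos : 0 < c := by positivity
  set E : ℝ → ℝ := fun t => ((δ + c * |t|) / 2) ^ (α - 2) with hE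
  have hEc : Continuous E := by
    refine Continuous.rpow_const (by fun_prop) ?_
    intro t
    left
    positivity
  have hFE : ∀ t ∈ Set.Icc (-Real.pi) Real.pi, F (t + φ) ≤ E t := by
    intro t ht
    simp only [hF, hE]
    refine Real.rpow_le_rpow_of_nonpos (by positivity) ?_ (by linarith)
    have a1 := hlow1 (t + φ)
    have a2 := circ_dist R t φ hR (abs_le.2 ht)
    have a3 := norm_sub_le_norm_sub_add_norm_sub
      (R * Complex.exp (Complex.I * (t + φ : ℝ)) : ℂ) z w
    rw [norm_sub_rev z w, hwz] at a3
    have a4 : 2 * R / Real.pi * |t| = 2 * (c * |t|) := by rw [hc]; ring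
    rw [a4] at a2
    linarith
  have hmono : ∫ t in (-Real.pi)..Real.pi, F (t + φ) ≤ ∫ t in (-Real.pi)..Real.pi, E t :=
    intervalIntegral.integral_mono_on (by linarith)
      ((hFc.comp (continuous_add_const φ)).intervalIntegrable _ _)
      (hEc.intervalIntegrable _ _) hFE
  have hsplit : ∫ t in (-Real.pi)..Real.pi, E t = 2 * ∫ t in (0:ℝ)..Real.pi, E t := by
    rw [← intervalIntegral.integral_add_adjacent_intervals (b := 0)
      (hEc.intervalIntegrable _ _) (hEc.intervalIntegrable _ _)]
    have : ∫ t in (-Real.pi)..0, E t = ∫ t in (0:ℝ)..Real.pi, E t := by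
      have h := intervalIntegral.integral_comp_neg (a := 0) (b := Real.pi) E
      rw [neg_zero] at h
      rw [← h]
      simp [hE]
    rw [this]; ring
  have hFTC : ∫ t in (0:ℝ)..Real.pi, E t =
      (2 / (c * (α - 1)) * ((δ + c * Real.pi) / 2) ^ (α - 1)) -
        (2 / (c * (α - 1)) * ((δ + c * 0) / 2) ^ (α - 1)) := by
    refine intervalIntegral.integral_eq_sub_of_hasDerivAt
      (f := fun t => 2 / (c * (α - 1)) * ((δ + c * t) / 2) ^ (α - 1)) ?_
      (hEc.intervalIntegrable _ _)
    intro t ht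
    rw [Set.uIcc_of_le hpi.le] at ht
    have hl : HasDerivAt (fun t : ℝ => (δ + c * t) / 2) (c / 2) t := by
      simpa using (((hasDerivAt_id t).const_mul c).const_add δ).div_const 2
    have hp : 0 < (δ + c * t) / 2 := by
      have := mul_nonneg hcpos.le ht.1
      linarith
    have := (hl.rpow_const (p := α - 1) (Or.inl hp.ne')).const_mul (2 / (c * (α - 1)))
    refine this.congr_deriv ?_
    simp only [hE, abs_of_nonneg ht.1]
    have : α - 1 ≠ 0 := by linarith
    have e2 : α - 1 - 1 = α - 2 := by ring
    rw [e2]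
    field_simp
  have hbd : ∫ t in (0:ℝ)..Real.pi, E t ≤ 2 / (c * (1 - α)) * (2 * δ ^ (α - 1)) := by
    rw [hFTC]
    have e1 : 2 / (c * (α - 1)) = - (2 / (c * (1 - α))) := by
      rw [← div_neg]; congr 1; ring
    rw [e1]
    have hpos2 : 0 < 2 / (c * (1 - α)) := by
      have : 0 < 1 - α := by linarith
      positivity
    have b1 : 0 ≤ ((δ + c * Real.pi) / 2) ^ (α - 1) := by positivity
    have b2 : ((δ + c * 0) / 2) ^ (α - 1) ≤ 2 * δ ^ (α - 1) := by
      rw [mul_zero, add_zero, Real.div_rpow hδpos.le (by norm_num), div_eq_mul_inv,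
        ← Real.rpow_neg (by norm_num), mul_comm]
      have : (2:ℝ) ^ (-(α - 1)) ≤ 2 := by
        calc (2:ℝ) ^ (-(α - 1)) ≤ 2 ^ (1:ℝ) :=
              Real.rpow_le_rpow_of_exponent_le (by norm_num) (by linarith)
          _ = 2 := by norm_num
      gcongr
    nlinarith [mul_nonneg hpos2.le b1, mul_le_mul_of_nonneg_left b2 hpos2.le]
  calc R * ∫ θ in (0:ℝ)..(2 * Real.pi), F θ ≤ R * (2 * (2 / (c * (1 - α)) * (2 * δ ^ (α - 1)))) := by
        rw [hshift]
        rw [hsplit] at hmono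
        gcongr
        linarith
    _ = _ := by
        have : 1 - α ≠ 0 := by linarith
        rw [hc]
        field_simp
        norm_num

theorem deriv_bound {k : ℕ} {α R : ℝ} (h0 : 0 < α) (h1 : α < 1) {U : Set ℂ} (hU : IsOpen U)
    (hRU : closedBall (0:ℂ) R ⊆ U) {M : ℝ} (hM : 0 ≤ M) {f : ℂ → ℂ} (hf : ContDiffOn ℝ k f U)
    (hH : ∀ i j, i + j = k → ∀ x ∈ closedBall (0:ℂ) R, ∀ y ∈ closedBall (0:ℂ) R,
      ‖wDij i j f x - wDij i j f y‖ ≤ M * ‖x - y‖ ^ α) {z : ℂ} (hz : z ∈ ball (0:ℂ) R) :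
    ‖Jn R f (k+1) z‖ ≤ 2 ^ k * M * (2 ^ k * 2 ^ α) * (8 * Real.pi / (1 - α)) *
      (R - ‖z‖) ^ (α - 1) := by
  have hR : 0 < R := (dist_nonneg).trans_lt (mem_ball.1 hz)
  have hzR : ‖z‖ < R := by simpa using hz
  have hfc : ContinuousOn f (closedBall 0 R) := hf.continuousOn.mono hRU
  set φ := Complex.arg z with hφ
  set w : ℂ := R * Complex.exp (Complex.I * φ) with hw
  have hwm : w ∈ closedBall (0:ℂ) R := by
    rw [mem_closedBall_zero_iff, hw, circ_norm hR]
  have hwz : ‖w - z‖ = R - ‖z‖ := by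
    have : w - z = (R - ‖z‖ : ℝ) * Complex.exp (Complex.I * φ) := by
      have := Complex.norm_mul_exp_arg_mul_I z
      rw [hw, mul_comm Complex.I]
      push_cast
      conv_lhs => rw [← this]
      ring
    rw [this, circ_norm (by linarith)]
  obtain ⟨P, hP, hPb⟩ := taylor_approx h0 hU hRU hM hwm k f hf hH
  have hPc : Continuous (fun x => P (x - w)) :=
    (RPoly_continuous hP).comp (by fun_prop)
  have hgc : ContinuousOn (fun x => f x - P (x - w)) (closedBall 0 R) :=
    hfc.sub hPc.continuousOn
  have hJ : Jn R f (k+1) z = Jn R (fun x => f x - P (x - w)) (k+1) z := by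
    have := Jn_add hgc hPc.continuousOn (k+1) hz
    simp only [sub_add_cancel] at this
    rw [Jn_poly hP w hz, add_zero] at this
    exact this
  rw [hJ]
  have hlow : ∀ θ : ℝ, R - ‖z‖ ≤ ‖(R * Complex.exp (Complex.I * θ) - z : ℂ)‖ := by
    intro θ
    have := norm_sub_norm_le (R * Complex.exp (Complex.I * θ) : ℂ) z
    rwa [circ_norm hR] at this
  set K := 2 ^ k * M * (2 ^ k * 2 ^ α) with hK
  have hKpos : 0 ≤ K := by positivity
  have hFc : Continuous
      (fun θ : ℝ => ‖(R * Complex.exp (Complex.I * θ) - z : ℂ)‖ ^ (α - 2)) := by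
    refine Continuous.rpow_const (by fun_prop) ?_
    intro θ
    left
    have := hlow θ
    linarith
  have hpi := Real.pi_pos
  have hnorm : ‖Jn R (fun x => f x - P (x - w)) (k+1) z‖ ≤ ∫ θ in (0:ℝ)..(2 * Real.pi),
      K * R * ‖(R * Complex.exp (Complex.I * θ) - z : ℂ)‖ ^ (α - 2) := by
    unfold Jn
    refine intervalIntegral.norm_integral_le_of_norm_le (by positivity) ?_
      ((continuous_const.mul hFc).intervalIntegrable _ _)
    refine Filter.Eventually.of_forall ?_
    intro θ _
    set ζ : ℂ := R * Complex.exp (Complex.I * θ) with hζ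
    have hζn : ‖ζ‖ = R := circ_norm hR θ
    have hζm : ζ ∈ closedBall (0:ℂ) R := by rw [mem_closedBall_zero_iff, hζn]
    set r := ‖ζ - z‖ with hr
    have hrl : R - ‖z‖ ≤ r := hlow θ
    have hrpos : 0 < r := by linarith
    have hζw : ‖ζ - w‖ ≤ 2 * r := by
      have := norm_sub_le_norm_sub_add_norm_sub ζ z w
      rw [norm_sub_rev z w, hwz] at this
      linarith
    have hlast : ‖(-Complex.I * R * Complex.exp (-Complex.I * θ) : ℂ)‖ = R := by
      rw [mul_assoc, norm_mul, ← conj_circ, RCLike.norm_conj, circ_norm hR]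
      simp
    rw [norm_div, norm_mul, norm_pow, hlast]
    have hb := hPb ζ hζm
    have hb2 : 2 ^ k * M * (‖ζ - w‖ ^ k * ‖ζ - w‖ ^ α) ≤ K * (r ^ k * r ^ α) := by
      calc 2 ^ k * M * (‖ζ - w‖ ^ k * ‖ζ - w‖ ^ α)
          ≤ 2 ^ k * M * ((2 * r) ^ k * (2 * r) ^ α) := by gcongr
        _ = K * (r ^ k * r ^ α) := by
          rw [Real.mul_rpow (by norm_num) hrpos.le, mul_pow, hK]
          ring
    have hpw : r ^ (α - 2) = r ^ α / r ^ 2 := by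
      rw [Real.rpow_sub hrpos]
      norm_num
    rw [← hr, div_le_iff₀ (by positivity), hpw]
    calc ‖f ζ - P (ζ - w)‖ * R ≤ K * (r ^ k * r ^ α) * R := by
          gcongr
          exact hb.trans hb2
      _ = _ := by
          field_simp
          ring
  refine hnorm.trans ?_
  rw [intervalIntegral.integral_const_mul, mul_assoc K R, mul_assoc K (8 * Real.pi / (1 - α))]
  exact mul_le_mul_of_nonneg_left (kernel_est h0 h1 hz) hKpos

theorem Hol_real {α : ℝ} {A : Set ℂ} {f : ℂ → ℂ} (hα : 0 < α) (hfin : Hol α A f < ⊤) :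
    ∀ x ∈ A, ∀ y ∈ A, ‖f x - f y‖ ≤ (Hol α A f).toReal * ‖x - y‖ ^ α := by
  intro x hx y hy
  by_cases hxy : x = y
  · subst hxy
    simp [Real.zero_rpow hα.ne']
  have hle : (‖f x - f y‖₊ : ℝ≥0∞) / (‖x - y‖₊ : ℝ≥0∞) ^ α ≤ Hol α A f := by
    unfold Hol
    exact le_iSup₂_of_le x hx (le_iSup₂_of_le y hy (le_iSup_of_le hxy le_rfl))
  have hpos : 0 < ‖x - y‖ := norm_pos_iff.2 (sub_ne_zero.2 hxy)
  have h2 := ENNReal.toReal_mono hfin.ne hle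
  rw [ENNReal.toReal_div, ← ENNReal.toReal_rpow] at h2
  simp only [ENNReal.coe_toReal, coe_nnnorm] at h2
  rwa [div_le_iff₀ (by positivity)] at h2

theorem Hol_le {α : ℝ} {A : Set ℂ} {f : ℂ → ℂ} {K : ℝ}
    (h : ∀ x ∈ A, ∀ y ∈ A, ‖f x - f y‖ ≤ K * ‖x - y‖ ^ α) : Hol α A f ≤ ENNReal.ofReal K := by
  unfold Hol
  refine iSup₂_le fun x hx => iSup₂_le fun y hy => iSup_le fun hxy => ?_
  have hpos : 0 < ‖x - y‖ := norm_pos_iff.2 (sub_ne_zero.2 hxy)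
  have h1 := h x hx y hy
  have e1 : (‖f x - f y‖₊ : ℝ≥0∞) = ENNReal.ofReal ‖f x - f y‖ := (ofReal_norm _).symm
  have e2 : (‖x - y‖₊ : ℝ≥0∞) ^ α = ENNReal.ofReal (‖x - y‖ ^ α) := by
    rw [← ENNReal.ofReal_rpow_of_pos hpos]
    congr 1
    exact (ofReal_norm _).symm
  rw [e1, e2, ← ENNReal.ofReal_div_of_pos (by positivity)]
  apply ENNReal.ofReal_le_ofReal
  rwa [div_le_iff₀ (by positivity)]

theorem single_le_antidiag (k : ℕ) (F : ℕ → ℕ → ℝ≥0∞) (i j : ℕ) (hij : i + j = k) :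
    F i j ≤ ∑ p ∈ Finset.HasAntidiagonal.antidiagonal k, F p.1 p.2 := by
  have hm : (i, j) ∈ Finset.HasAntidiagonal.antidiagonal k :=
    Finset.HasAntidiagonal.mem_antidiagonal.2 hij
  exact Finset.single_le_sum_of_canonicallyOrdered (f := fun p : ℕ × ℕ => F p.1 p.2) hm

/-- `H_α[∂^k S_b f] ≤ C Σ_{i+j=k} H_α[∂^i∂̄^j f]`, the left-hand
Hölder constant being taken over the open disk. -/
theorem Sb_deriv_holder_bound (k : ℕ) (α : ℝ) (hα : α ∈ Set.Ioo (0:ℝ) 1) :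
    ∃ C : ℝ, 0 < C ∧ ∀ R : ℝ, 0 < R → ∀ f : ℂ → ℂ, CkHolder k α R f →
      Hol α (ball (0:ℂ) R) (iteratedDeriv k (Sb R f)) ≤
        ENNReal.ofReal C *
          ∑ p ∈ Finset.HasAntidiagonal.antidiagonal k, Hol α (closedBall (0:ℂ) R) (wDij p.1 p.2 f) := by
  obtain ⟨h0, h1⟩ := hα
  have hpi := Real.pi_pos
  have h1' : 0 < 1 - α := by linarith
  set C0 : ℝ := ‖((2 * Real.pi * Complex.I)⁻¹ : ℂ)‖ * (Nat.factorial (k+1) *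
    (2 ^ k * (2 ^ k * 2 ^ α) * (8 * Real.pi / (1 - α)))) with hC0
  have hC0pos : 0 < C0 := by
    have : 0 < ‖((2 * Real.pi * Complex.I)⁻¹ : ℂ)‖ := by
      rw [norm_pos_iff]
      exact inv_ne_zero Complex.two_pi_I_ne_zero
    positivity
  refine ⟨C0 * (2 / α + 2), by positivity, ?_⟩
  intro R hR f hf
  obtain ⟨⟨U, hU, hRU, hfU⟩, hfin⟩ := hf
  set S : ℝ≥0∞ := ∑ p ∈ Finset.HasAntidiagonal.antidiagonal k,
    Hol α (closedBall (0:ℂ) R) (wDij p.1 p.2 f) with hS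
  have hSfin : S ≠ ⊤ := by
    refine (ENNReal.sum_lt_top.2 ?_).ne
    intro p hp
    exact hfin p.1 p.2 (Finset.HasAntidiagonal.mem_antidiagonal.1 hp)
  set M := S.toReal with hM
  have hM0 : 0 ≤ M := ENNReal.toReal_nonneg
  have hH : ∀ i j, i + j = k → ∀ x ∈ closedBall (0:ℂ) R, ∀ y ∈ closedBall (0:ℂ) R,
      ‖wDij i j f x - wDij i j f y‖ ≤ M * ‖x - y‖ ^ α := by
    intro i j hij x hx y hy
    refine (Hol_real h0 (hfin i j hij) x hx y hy).trans ?_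
    have : (Hol α (closedBall (0:ℂ) R) (wDij i j f)).toReal ≤ M := by
      refine ENNReal.toReal_mono hSfin ?_
      exact single_le_antidiag k (fun a b => Hol α (closedBall (0:ℂ) R) (wDij a b f)) i j hij
    gcongr
  have hfc : ContinuousOn f (closedBall 0 R) := hfU.continuousOn.mono hRU
  have hmain := hardy_littlewood (A := C0 * M) h0 h1 hR (by positivity)
    (fun z hz => Sb_iter_hasDerivAt hfc k hz) (by
      intro z hz
      rw [norm_mul, norm_mul, Complex.norm_natCast]
      have := deriv_bound h0 h1 hU hRU hM0 hfU hH hz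
      calc _ ≤ ‖((2 * Real.pi * Complex.I)⁻¹ : ℂ)‖ * (Nat.factorial (k+1) *
            (2 ^ k * M * (2 ^ k * 2 ^ α) * (8 * Real.pi / (1 - α)) *
              (R - ‖z‖) ^ (α - 1))) := by gcongr
        _ = _ := by rw [hC0]; ring)
  refine (Hol_le hmain).trans ?_
  have e : C0 * M * (2 / α + 2) = C0 * (2 / α + 2) * M := by ring
  rw [e, ENNReal.ofReal_mul (by positivity), hM, ENNReal.ofReal_toReal hSfin]
end
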